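/- arXiv:1103.2893 — 12 statements merged into one kernel-verified Lean document; each statement's English description precedes it below -/
import Mathlib

section
/- Let K be a field and Ω/K a Galois field extension, with Gal(Ω/K) carrying the Krull topology. Let I be a subset of ℕ, and for every i ∈ I let Γ_i be a profinite group and ρ_i : Gal(Ω/K) → Γ_i a continuous group homomorphism. For each i ∈ I let K_i be the fixed field in Ω of ker(ρ_i). Then the following two conditions are equivalent: (i) the homomorphism Gal(Ω/K) → ∏_{i∈I} ρ_i(Gal(Ω/K)) induced by the ρ_i is surjective; (ii) for every s ≥ 1 and all indices i₁ < i₂ < ⋯ < i_{s+1} in I, the intersection of the compositum K_{i₁}·K_{i₂}⋯K_{i_s} with K_{i_{s+1}} equals K. -/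
open IntermediateField

theorem aux_sup {K Ω : Type*} [Field K] [Field Ω] [Algebra K Ω] [IsGalois K Ω]
    (L M : IntermediateField K Ω) (hM : M.fixingSubgroup.Normal) (h : L ⊓ M = ⊥)
    (σ : Ω ≃ₐ[K] Ω) :
    ∃ a ∈ L.fixingSubgroup, ∃ b ∈ M.fixingSubgroup, a * b = σ := by
  have hc : IsClosed ((L.fixingSubgroup ⊔ M.fixingSubgroup : Subgroup (Ω ≃ₐ[K] Ω)) :
      Set (Ω ≃ₐ[K] Ω)) := by
    rw [Subgroup.mul_normal]
    exact ((InfiniteGalois.fixingSubgroup_isClosed L).isCompact.mul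
      (InfiniteGalois.fixingSubgroup_isClosed M).isCompact).isClosed
  have h1 := InfiniteGalois.fixingSubgroup_fixedField
    (⟨L.fixingSubgroup ⊔ M.fixingSubgroup, hc⟩ : ClosedSubgroup (Ω ≃ₐ[K] Ω))
  have h2 : IntermediateField.fixedField (L.fixingSubgroup ⊔ M.fixingSubgroup) = ⊥ := by
    rw [eq_bot_iff, ← h]
    apply le_inf
    · conv_rhs => rw [← InfiniteGalois.fixedField_fixingSubgroup L]
      exact IntermediateField.fixedField_antitone le_sup_left
    · conv_rhs => rw [← InfiniteGalois.fixedField_fixingSubgroup M]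
      exact IntermediateField.fixedField_antitone le_sup_right
  have h3 : L.fixingSubgroup ⊔ M.fixingSubgroup = ⊤ := by
    rw [← IntermediateField.fixingSubgroup_bot, ← h2]
    exact h1.symm
  have h4 : σ ∈ L.fixingSubgroup ⊔ M.fixingSubgroup := by rw [h3]; trivial
  rw [← SetLike.mem_coe, Subgroup.mul_normal] at h4
  exact h4

/-- For a Galois extension `Ω/K` and a family of continuous homomorphisms
`ρ i : Gal(Ω/K) → Γ i` (indexed by a subset `I` of `ℕ`) into profinite groups, with `K i`
the fixed field of `ker (ρ i)`, the following are equivalent: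
(i) the induced map `Gal(Ω/K) → ∏_{i ∈ I} ρ i (Gal(Ω/K))` is surjective;
(ii) for every `s ≥ 1` and all indices `i₁ < ⋯ < i_{s+1}` in `I`, the intersection of the
compositum `K i₁ ⋯ K i_s` with `K i_{s+1}` equals `K`. -/
theorem stmt0
    (K Ω : Type*) [Field K] [Field Ω] [Algebra K Ω] [IsGalois K Ω]
    (I : Set ℕ)
    (Γ : I → Type*) [∀ i, Group (Γ i)] [∀ i, TopologicalSpace (Γ i)]
    [∀ i, IsTopologicalGroup (Γ i)] [∀ i, CompactSpace (Γ i)] [∀ i, T2Space (Γ i)]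
    [∀ i, TotallyDisconnectedSpace (Γ i)]
    (ρ : ∀ i : I, (Ω ≃ₐ[K] Ω) →* Γ i) (hρ : ∀ i, Continuous (ρ i))
    (Kfld : ∀ i : I, IntermediateField K Ω)
    (hKfld : ∀ i, Kfld i = IntermediateField.fixedField (ρ i).ker) :
    Function.Surjective
        (fun σ : Ω ≃ₐ[K] Ω => fun i : I => (⟨ρ i σ, ⟨σ, rfl⟩⟩ : (ρ i).range)) ↔
      ∀ (s : ℕ), 1 ≤ s → ∀ f : Fin (s + 1) → I, StrictMono (fun j => (f j : ℕ)) →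
        (⨆ j : Fin s, Kfld (f j.castSucc)) ⊓ Kfld (f (Fin.last s)) = ⊥ := by
  have hfix : ∀ i, (Kfld i).fixingSubgroup = (ρ i).ker := by
    intro i
    have hc : IsClosed ((ρ i).ker : Set (Ω ≃ₐ[K] Ω)) :=
      isClosed_singleton.preimage (hρ i)
    rw [hKfld i]
    exact InfiniteGalois.fixingSubgroup_fixedField
      (⟨(ρ i).ker, hc⟩ : ClosedSubgroup (Ω ≃ₐ[K] Ω))
  constructor
  · intro hs s _ f hf
    rw [eq_bot_iff]
    intro x hx
    rw [IntermediateField.mem_inf] at hx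
    rw [InfiniteGalois.mem_bot_iff_fixed]
    intro σ
    classical
    obtain ⟨τ, hτ⟩ := hs (fun i => if i = f (Fin.last s) then ⟨ρ i σ, ⟨σ, rfl⟩⟩ else 1)
    have h1 : ∀ i, i ≠ f (Fin.last s) → ρ i τ = 1 := by
      intro i hi
      have := congrFun hτ i
      simp only [hi, if_false] at this
      exact congrArg Subtype.val this
    have h2 : ρ (f (Fin.last s)) τ = ρ (f (Fin.last s)) σ := by
      have := congrFun hτ (f (Fin.last s))
      simp only [if_true] at this
      exact congrArg Subtype.val this
    have h3 : τ x = x := by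
      have hle : (⨆ j : Fin s, Kfld (f j.castSucc)) ≤
          IntermediateField.fixedField (Subgroup.zpowers τ) := by
        apply iSup_le
        intro j
        rw [IntermediateField.le_iff_le, hfix, Subgroup.zpowers_le, MonoidHom.mem_ker]
        apply h1
        intro he
        have : (fun j => (f j : ℕ)) j.castSucc = (fun j => (f j : ℕ)) (Fin.last s) := by
          simp only [he]
        exact (Fin.castSucc_lt_last j).ne (hf.injective this)
      have := hle hx.1
      rw [IntermediateField.mem_fixedField_iff] at this
      exact this τ (Subgroup.mem_zpowers τ)
    have h4 : (τ⁻¹ * σ) x = x := by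
      have hm : τ⁻¹ * σ ∈ (Kfld (f (Fin.last s))).fixingSubgroup := by
        rw [hfix, MonoidHom.mem_ker, map_mul, map_inv, h2, inv_mul_cancel]
      rw [IntermediateField.mem_fixingSubgroup_iff] at hm
      exact hm x hx.2
    calc σ x = (τ * (τ⁻¹ * σ)) x := by rw [mul_inv_cancel_left]
      _ = τ ((τ⁻¹ * σ) x) := rfl
      _ = x := by rw [h4, h3]
  · intro h y
    choose τ hτ using fun i => (y i).2
    have key : ∀ n : ℕ, ∃ σ : Ω ≃ₐ[K] Ω, ∀ i : I, (i : ℕ) < n → ρ i σ = y i := by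
      classical
      intro n
      induction n with
      | zero => exact ⟨1, fun i hi => absurd hi (Nat.not_lt_zero _)⟩
      | succ n ih =>
        obtain ⟨σ, hσ⟩ := ih
        by_cases hn : n ∈ I
        swap
        · refine ⟨σ, fun i hi => hσ i ?_⟩
          rcases Nat.lt_succ_iff_lt_or_eq.mp hi with h' | h'
          · exact h'
          · exact absurd (h' ▸ i.2) hn
        let T : Finset ℕ := (Finset.range n).filter (· ∈ I)
        have hT : ∀ k, k ∈ T ↔ k < n ∧ k ∈ I := by intro k; simp [T]
        let e := T.orderEmbOfFin rfl
        have he : ∀ j, e j ∈ T := fun j => T.orderEmbOfFin_mem rfl j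
        have hmain : ∃ a : Ω ≃ₐ[K] Ω, (∀ i : I, (i : ℕ) < n → ρ i a = 1) ∧
            ρ ⟨n, hn⟩ a = ρ ⟨n, hn⟩ (σ⁻¹ * τ ⟨n, hn⟩) := by
          rcases Nat.eq_zero_or_pos T.card with h0 | h0
          · refine ⟨_, fun i hi => ?_, rfl⟩
            rw [Finset.card_eq_zero] at h0
            have := (hT i).2 ⟨hi, i.2⟩
            simp [h0] at this
          let f : Fin (T.card + 1) → I :=
            Fin.snoc (α := fun _ => I) (fun j => ⟨e j, ((hT _).1 (he j)).2⟩) ⟨n, hn⟩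
          have hf1 : ∀ j : Fin T.card, f j.castSucc = ⟨e j, ((hT _).1 (he j)).2⟩ := by
            intro j; simp [f]
          have hf2 : f (Fin.last _) = ⟨n, hn⟩ := by simp [f]
          have hmono : StrictMono (fun j => (f j : ℕ)) := by
            intro a b hab
            induction b using Fin.lastCases with
            | last =>
              induction a using Fin.lastCases with
              | last => exact absurd hab (lt_irrefl _)
              | cast a =>
                simp only [hf1, hf2]
                exact ((hT _).1 (he a)).1
            | cast b =>
              induction a using Fin.lastCases with
              | last => exact absurd hab (not_lt.2 (Fin.le_last _))
              | cast a =>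
                simp only [hf1]
                exact e.strictMono (Fin.castSucc_lt_castSucc_iff.1 hab)
          have hb := h T.card h0 f hmono
          obtain ⟨a, ha, b, hb, hab⟩ := aux_sup _ _
            (by rw [hfix]; infer_instance) hb (σ⁻¹ * τ ⟨n, hn⟩)
          rw [hf2, hfix, MonoidHom.mem_ker] at hb
          refine ⟨a, fun i hi => ?_, ?_⟩
          · have hi' : (i : ℕ) ∈ Set.range e := by
              rw [Finset.range_orderEmbOfFin]
              exact (hT i).2 ⟨hi, i.2⟩
            obtain ⟨j, hj⟩ := hi'
            have hij : f j.castSucc = i := by rw [hf1]; exact Subtype.ext hj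
            have := IntermediateField.fixingSubgroup_le
              (le_iSup (fun j : Fin T.card => Kfld (f j.castSucc)) j) ha
            simp only [hij] at this
            rwa [hfix, MonoidHom.mem_ker] at this
          · rw [← hab, map_mul, hb, mul_one]
        obtain ⟨a, ha1, ha2⟩ := hmain
        refine ⟨σ * a, fun i hi => ?_⟩
        rcases Nat.lt_succ_iff_lt_or_eq.mp hi with h' | h'
        · rw [map_mul, ha1 i h', mul_one, hσ i h']
        · obtain rfl : i = ⟨n, hn⟩ := Subtype.ext h'
          rw [map_mul, ha2, map_mul, map_inv, mul_inv_cancel_left, hτ]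
    have hne := IsCompact.nonempty_iInter_of_sequence_nonempty_isCompact_isClosed
      (fun n : ℕ => {σ : Ω ≃ₐ[K] Ω | ∀ i : I, (i : ℕ) < n → ρ i σ = y i})
      (fun n σ hσ i hi => hσ i (Nat.lt_succ_of_lt hi)) key
    have hcl : ∀ n : ℕ, IsClosed {σ : Ω ≃ₐ[K] Ω | ∀ i : I, (i : ℕ) < n → ρ i σ = y i} := by
      intro n
      simp only [Set.setOf_forall]
      exact isClosed_iInter fun i => isClosed_iInter fun _ =>
        isClosed_singleton.preimage (hρ i)
    obtain ⟨σ, hσ⟩ := hne (hcl 0).isCompact hcl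
    refine ⟨σ, funext fun i => Subtype.ext ?_⟩
    exact Set.mem_iInter.1 hσ (i + 1) i (Nat.lt_succ_self _)
end

section
/- Let Γ be a profinite group. For every prime number ℓ let Γ_ℓ be a profinite group and ρ_ℓ : Γ → Γ_ℓ a continuous group homomorphism. Let Γ' ⊆ Γ be an open subgroup. If the family (ρ_ℓ)_ℓ is independent, i.e. the induced homomorphism Γ → ∏_ℓ ρ_ℓ(Γ) (product over all primes ℓ) is surjective, then there exists a finite set I of prime numbers such that the family (ρ_ℓ)_{ℓ∉I} is independent over Γ', i.e. the homomorphism Γ' → ∏_{ℓ∉I} ρ_ℓ(Γ') induced by the ρ_ℓ with ℓ ∉ I is surjective. -/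
/-- If a family of continuous homomorphisms `ρ ℓ` (indexed by the primes)
from a profinite group `Γ` to profinite groups `Γℓ ℓ` is independent, then for every open
subgroup `Γ'` of `Γ` there is a finite set `I` of primes such that the family
`(ρ ℓ)_{ℓ ∉ I}` is independent over `Γ'`. -/
theorem stmt1
    (Γ : Type*) [Group Γ] [TopologicalSpace Γ] [IsTopologicalGroup Γ]
    [CompactSpace Γ] [T2Space Γ] [TotallyDisconnectedSpace Γ]
    (Γℓ : Nat.Primes → Type*) [∀ ℓ, Group (Γℓ ℓ)] [∀ ℓ, TopologicalSpace (Γℓ ℓ)]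
    [∀ ℓ, IsTopologicalGroup (Γℓ ℓ)] [∀ ℓ, CompactSpace (Γℓ ℓ)] [∀ ℓ, T2Space (Γℓ ℓ)]
    [∀ ℓ, TotallyDisconnectedSpace (Γℓ ℓ)]
    (ρ : ∀ ℓ : Nat.Primes, Γ →* Γℓ ℓ) (hρ : ∀ ℓ, Continuous (ρ ℓ))
    (Γ' : Subgroup Γ) (hΓ' : IsOpen (Γ' : Set Γ))
    (hindep : Function.Surjective
      (fun g : Γ => fun ℓ : Nat.Primes => (⟨ρ ℓ g, ⟨g, rfl⟩⟩ : (ρ ℓ).range))) :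
    ∃ I : Finset Nat.Primes, Function.Surjective
      (fun g : Γ' => fun ℓ : {ℓ : Nat.Primes // ℓ ∉ I} =>
        (⟨ρ ℓ.1 g.1, ⟨g.1, g.2, rfl⟩⟩ : Subgroup.map (ρ ℓ.1) Γ')) := by
  classical
  let F : Γ →* (∀ ℓ : Nat.Primes, (ρ ℓ).range) := MonoidHom.pi fun ℓ => (ρ ℓ).rangeRestrict
  have hF : Function.Surjective F := hindep
  have hc : Continuous F :=
    continuous_pi fun ℓ => Continuous.subtype_mk (hρ ℓ) _
  haveI : CompactSpace (∀ ℓ : Nat.Primes, (ρ ℓ).range) := hF.compactSpace hc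
  have ho : IsOpenMap F := MonoidHom.isOpenMap_of_sigmaCompact F hF hc
  have h1 := ho _ hΓ'
  obtain ⟨I, u, hu, hsub⟩ := isOpen_pi_iff.1 h1 1 ⟨1, Γ'.one_mem, map_one F⟩
  refine ⟨I, fun y => ?_⟩
  have hy : ∀ ℓ, ∀ x ∈ Subgroup.map (ρ ℓ) Γ', x ∈ (ρ ℓ).range := by
    rintro ℓ x ⟨g, -, rfl⟩
    exact ⟨g, rfl⟩
  let z : ∀ ℓ : Nat.Primes, (ρ ℓ).range := fun ℓ =>
    if h : ℓ ∈ I then 1 else ⟨(y ⟨ℓ, h⟩).1, hy _ _ (y ⟨ℓ, h⟩).2⟩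
  have hz : z ∈ (I : Set Nat.Primes).pi u := by
    intro ℓ hℓ
    have hℓ' : ℓ ∈ I := hℓ
    have : z ℓ = 1 := dif_pos hℓ'
    rw [this]
    exact (hu ℓ hℓ').2
  obtain ⟨g, hg, hgz⟩ := hsub hz
  refine ⟨⟨g, hg⟩, ?_⟩
  funext ⟨ℓ, hℓ⟩
  apply Subtype.ext
  have h2 : (F g ℓ).1 = (z ℓ).1 := by rw [hgz]
  have h3 : z ℓ = ⟨(y ⟨ℓ, hℓ⟩).1, hy _ _ (y ⟨ℓ, hℓ⟩).2⟩ := dif_neg hℓ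
  rw [h3] at h2
  exact h2
end

section
/- Let K be a finitely generated extension of ℚ. Let E/K be a (possibly infinite) Galois field extension such that Gal(E/K) has finite exponent. Let x₁,…,x_m ∈ K be a transcendence base of K over ℚ, and let R be the integral closure in E of the subring ℤ[x₁,…,x_m] of E generated by x₁,…,x_m over ℤ. Then for every maximal ideal 𝔪 of R, the residue field R/𝔪 is finite. -/
lemma aux_jacobson_int : IsJacobsonRing ℤ := by
  rw [isJacobsonRing_iff_prime_eq]
  intro P hP
  by_cases h : P = ⊥
  · subst h
    refine le_antisymm ?_ Ideal.le_jacobson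
    intro x hx
    rw [Ideal.mem_jacobson_bot] at hx
    have h1 := hx (3 * x)
    rw [Int.isUnit_iff] at h1
    by_contra hne
    have h2 : x ≠ 0 := fun h => hne (by simp [h])
    have h3 : 0 < x * x := mul_self_pos.mpr h2
    rcases h1 with h1 | h1 <;> nlinarith
  · have := hP.isMaximal h
    exact Ideal.jacobson_eq_self_of_isMaximal

lemma aux_finite_field (k : Type*) [Field k] [Algebra.FiniteType ℤ k] : Finite k := by
  have := aux_jacobson_int
  have := finite_of_finite_type_of_isJacobsonRing ℤ k
  have hint : Algebra.IsIntegral ℤ k := inferInstance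
  obtain ⟨p, hp⟩ := CharP.exists k
  rcases CharP.char_is_prime_or_zero k p with h | h
  · have := Fact.mk h
    let := ZMod.algebra k p
    have : Module.Finite (ZMod p) k := Module.Finite.of_restrictScalars_finite ℤ (ZMod p) k
    exact Module.finite_of_finite (ZMod p)
  · subst h
    have : CharZero k := CharP.charP_to_charZero k
    exact absurd (isField_of_isIntegral_of_isField (R := ℤ) (S := k) (by
      exact RingHom.injective_int (algebraMap ℤ k)) (Field.toIsField k)) Int.not_isField

lemma aux_finite_quot (S B : Type*) [CommRing S] [CommRing B] [Algebra S B]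
    [Algebra.FiniteType ℤ S] [Algebra.FiniteType S B] (Q : Ideal B) [Q.IsMaximal] :
    Finite (B ⧸ Q) := by
  have h1 : Algebra.FiniteType ℤ B := Algebra.FiniteType.trans (S := S) inferInstance inferInstance
  have h2 : Algebra.FiniteType ℤ (B ⧸ Q) := 
    Algebra.FiniteType.of_surjective (Ideal.Quotient.mkₐ ℤ Q) (Ideal.Quotient.mkₐ_surjective ℤ Q)
  exact @aux_finite_field (B ⧸ Q) (Ideal.Quotient.field Q) h2

lemma aux_frob (S K F B : Type*) [CommRing S] [Field K] [Field F] [CommRing B]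
    [IsIntegrallyClosed S] [Algebra S K] [IsFractionRing S K] [Algebra S B] [Algebra B F]
    [Algebra K F] [Algebra S F] [IsScalarTower S K F] [IsScalarTower S B F]
    [IsIntegralClosure B S F] [FiniteDimensional K F] [IsGalois K F]
    [IsFractionRing B F]
    (n : ℕ) (hn : ∀ σ : F ≃ₐ[K] F, σ ^ n = 1)
    (Q : Ideal B) [Q.IsMaximal] [Finite (B ⧸ Q)] (b : B) :
    b ^ ((Nat.card (S ⧸ Q.under S)) ^ n) - b ∈ Q := by
  have := Algebra.isInvariant_of_isGalois' S K F B
  have hfin : Finite (B ≃ₐ[S] B) := Finite.of_equiv _ (galRestrict S K F B).toEquiv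
  obtain ⟨σ, hσ⟩ := IsArithFrobAt.exists_of_isInvariant S (B ≃ₐ[S] B) Q
  have hσn : σ ^ n = 1 := by
    obtain ⟨τ, rfl⟩ := (galRestrict S K F B).surjective σ
    rw [← map_pow, hn, map_one]
  have key : ∀ k : ℕ, ∀ b : B,
      b ^ ((Nat.card (S ⧸ Q.under S)) ^ k) - (σ ^ k) b ∈ Q := by
    intro k
    induction k with
    | zero => intro b; simp
    | succ k ih =>
      intro b
      have h1 := ih (σ b)
      have h2 : σ b - b ^ (Nat.card (S ⧸ Q.under S)) ∈ Q := hσ b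
      rw [← Ideal.Quotient.eq] at h1 h2 ⊢
      rw [pow_succ σ, AlgEquiv.mul_apply, ← h1, pow_succ', pow_mul, map_pow, map_pow, map_pow, h2, map_pow]
  have := key n b
  rwa [hσn] at this

lemma aux_main (S K E R : Type*) [CommRing S] [Field K] [Field E] [CommRing R]
    [IsIntegrallyClosed S] [Algebra.FiniteType ℤ S]
    [Algebra S K] [IsFractionRing S K] [Algebra S R] [Algebra R E]
    [Algebra K E] [Algebra S E] [IsScalarTower S K E] [IsScalarTower S R E]
    [IsIntegralClosure R S E] [IsGalois K E]
    (n : ℕ) (hn1 : 1 ≤ n) (hn : ∀ σ : E ≃ₐ[K] E, σ ^ n = 1)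
    (Q : Ideal R) [Q.IsMaximal] : Finite (R ⧸ Q) := by
  have hSd : IsDomain S := (IsFractionRing.injective S K).isDomain
  have hSn : IsNoetherianRing S := Algebra.FiniteType.isNoetherianRing ℤ S
  have hSint : Algebra.IsIntegral S R := IsIntegralClosure.isIntegral_algebra S E
  have hSmax : (Q.under S).IsMaximal := Ideal.isMaximal_comap_of_isIntegral_of_isMaximal Q
  have hfS : Finite (S ⧸ Q.under S) := aux_finite_quot S S _
  set q := Nat.card (S ⧸ Q.under S) with hq
  have hq1 : 1 < q := by
    have : Nontrivial (S ⧸ Q.under S) := Ideal.Quotient.nontrivial_iff.mpr hSmax.ne_top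
    exact Finite.one_lt_card
  have key : ∀ r : R, r ^ (q ^ n) - r ∈ Q := by
    intro r
    let e : E := algebraMap R E r
    have he : IsIntegral S e := (IsIntegralClosure.isIntegral S E r).algebraMap
    have heK : IsIntegral K e := he.tower_top
    have : FiniteDimensional K (IntermediateField.adjoin K {e}) :=
      IntermediateField.adjoin.finiteDimensional heK
    let F := IntermediateField.normalClosure K (IntermediateField.adjoin K {e}) E
    have hFfin : FiniteDimensional K F := normalClosure.is_finiteDimensional _ _ _
    have hFnorm : Normal K F := normalClosure.normal _ _ _
    have hFgal : IsGalois K F := { }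
    have heF : e ∈ F := by
      have : (IntermediateField.adjoin K {e}) ≤ F := IntermediateField.le_normalClosure _
      exact this (IntermediateField.mem_adjoin_simple_self K e)
    let B := integralClosure S F
    have hBfr : IsFractionRing B F :=
      IsIntegralClosure.isFractionRing_of_finite_extension S K F B
    have hBfin : Module.Finite S B := IsIntegralClosure.finite S K F B
    have hF : ∀ σ : F ≃ₐ[K] F, σ ^ n = 1 := by
      intro σ
      obtain ⟨τ, rfl⟩ := AlgEquiv.restrictNormalHom_surjective (F := K) (K₁ := F) E σ
      rw [← map_pow, hn, map_one]
    -- the map from B to R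
    let g : B →ₐ[S] E := (F.val.restrictScalars S).comp B.val
    have hg : ∀ b : B, IsIntegral S (g b) := fun b =>
      (Algebra.IsIntegral.isIntegral (R := S) b).map g
    let f : B →ₐ[S] R := 
      ((IsIntegralClosure.equiv S (integralClosure S E) E R).toAlgHom).comp
        (g.codRestrict (integralClosure S E) hg)
    have hf : ∀ b, algebraMap R E (f b) = g b := by
      intro b
      simp only [f, AlgHom.comp_apply]
      exact IsIntegralClosure.algebraMap_equiv S (integralClosure S E) E R _
    let QB : Ideal B := Q.comap f
    have hQB : (QB.under S) = Q.under S := by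
      ext s
      simp [QB, Ideal.mem_comap]
    have hQBp : QB.IsPrime := Ideal.comap_isPrime f Q
    have hQBm : QB.IsMaximal := 
      Ideal.isMaximal_of_isIntegral_of_isMaximal_comap (R := S) QB (by
        have := hSmax; rw [← hQB] at this; exact this)
    have : Finite (B ⧸ QB) := aux_finite_quot S B QB
    have heF' : IsIntegral S (⟨e, heF⟩ : F) := by
      rw [← isIntegral_algHom_iff (F.val.restrictScalars S) (RingHom.injective _)]
      exact he
    let b : B := ⟨⟨e, heF⟩, heF'⟩
    have hb : f b = r := by
      apply IsIntegralClosure.algebraMap_injective R S E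
      rw [hf]; rfl
    have h := aux_frob S K F B n hF QB b
    rw [hQB] at h
    have h' : f (b ^ (q ^ n) - b) ∈ Q := h
    rwa [map_sub, map_pow, hb] at h'
  let := Ideal.Quotient.field Q
  have hqn : 1 < q ^ n := Nat.one_lt_pow (by omega) hq1
  have hne : (Polynomial.X ^ (q ^ n) - Polynomial.X : Polynomial (R ⧸ Q)) ≠ 0 :=
    FiniteField.X_pow_card_sub_X_ne_zero _ hqn
  have hfs := Polynomial.rootSet_finite (Polynomial.X ^ (q ^ n) - Polynomial.X : Polynomial (R ⧸ Q)) (R ⧸ Q)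
  refine Set.finite_univ_iff.mp (hfs.subset ?_)
  intro a _
  obtain ⟨r, rfl⟩ := Ideal.Quotient.mk_surjective a
  rw [Polynomial.mem_rootSet]
  refine ⟨hne, ?_⟩
  have := Ideal.Quotient.eq.mpr (key r)
  simp only [map_sub, map_pow, Polynomial.aeval_X] at this ⊢
  rw [this, sub_self]

lemma aux_fd (k K L : Type*) [Field k] [Field K] [Field L] [Algebra k K] [Algebra k L]
    [Algebra L K] [IsScalarTower k L K] (s : Set K) (hs : s ⊆ Set.range (algebraMap L K))
    (halg : Algebra.IsAlgebraic (IntermediateField.adjoin k s) K)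
    (hfg : ∃ s : Finset K, IntermediateField.adjoin k (s : Set K) = ⊤) :
    FiniteDimensional L K := by
  let W : IntermediateField k K := (IsScalarTower.toAlgHom k L K).fieldRange
  have hW : IntermediateField.adjoin k s ≤ W := by
    rw [IntermediateField.adjoin_le_iff]
    exact hs
  have halg : Algebra.IsAlgebraic L K := by
    let e : L ≃ₐ[k] W := AlgEquiv.ofInjectiveField (IsScalarTower.toAlgHom k L K)
    let ψ : IntermediateField.adjoin k s →+* L :=
      (e.symm.toRingEquiv.toRingHom).comp (IntermediateField.inclusion hW).toRingHom
    let := ψ.toAlgebra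
    have : IsScalarTower (IntermediateField.adjoin k s) L K := by
      refine .of_algebraMap_eq fun a => ?_
      have h := e.apply_symm_apply (IntermediateField.inclusion hW a)
      exact (congrArg Subtype.val h).symm
    exact Algebra.IsAlgebraic.tower_top (K := IntermediateField.adjoin k s) L
  have hess : Algebra.EssFiniteType k K := IntermediateField.fg_top_iff.mp hfg
  have hess' : Algebra.EssFiniteType L K := .of_comp k L K
  exact Algebra.finite_of_essFiniteType_of_isAlgebraic

lemma aux_S (K : Type*) [Field K] [Algebra ℚ K]
    (hKfg : ∃ s : Finset K, IntermediateField.adjoin ℚ (s : Set K) = ⊤)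
    (m : ℕ) (x : Fin m → K)
    (hx_ind : AlgebraicIndependent ℚ x)
    (hx_alg : Algebra.IsAlgebraic (IntermediateField.adjoin ℚ (Set.range x)) K) :
    Algebra.FiniteType ℤ (integralClosure (Algebra.adjoin ℤ (Set.range x)) K) ∧
    IsIntegrallyClosed (integralClosure (Algebra.adjoin ℤ (Set.range x)) K) ∧
    IsFractionRing (integralClosure (Algebra.adjoin ℤ (Set.range x)) K) K := by
  have hK0 : CharZero K := algebraRat.charZero K
  set A0 := Algebra.adjoin ℤ (Set.range x) with hA0
  have hZ : AlgebraicIndependent ℤ x :=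
    hx_ind.restrictScalars (RingHom.injective_int (algebraMap ℤ ℚ))
  have hic : IsIntegrallyClosed A0 := IsIntegrallyClosed.of_equiv hZ.aevalEquiv.toRingEquiv
  have hft : Algebra.FiniteType ℤ A0 := .adjoin_of_finite (Set.finite_range x)
  have hnoeth : IsNoetherianRing A0 := Algebra.FiniteType.isNoetherianRing ℤ A0
  let := FractionRing.liftAlgebra A0 K
  let Fr := FractionRing A0
  have hFr0 : CharZero Fr :=
    charZero_of_injective_algebraMap (IsFractionRing.injective A0 Fr)
  have htow : IsScalarTower ℚ Fr K := inferInstance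
  have hfd : FiniteDimensional Fr K := by
    refine aux_fd ℚ K Fr (Set.range x) ?_ hx_alg hKfg
    rintro _ ⟨i, rfl⟩
    refine ⟨algebraMap A0 Fr ⟨x i, Algebra.subset_adjoin ⟨i, rfl⟩⟩, ?_⟩
    exact (IsScalarTower.algebraMap_apply A0 Fr K _).symm
  have hfin : Module.Finite A0 (integralClosure A0 K) := IsIntegralClosure.finite A0 Fr K _
  refine ⟨?_, integralClosure.isIntegrallyClosedOfFiniteExtension Fr,
    integralClosure.isFractionRing_of_finite_extension Fr K⟩
  exact Algebra.FiniteType.trans hft inferInstance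

theorem stmt2
    (K : Type*) [Field K] [Algebra ℚ K]
    (hKfg : ∃ s : Finset K, IntermediateField.adjoin ℚ (s : Set K) = ⊤)
    (E : Type*) [Field E] [Algebra K E] [Algebra ℚ E] [IsScalarTower ℚ K E]
    [IsGalois K E]
    (hexp : ∃ n : ℕ, 1 ≤ n ∧ ∀ σ : E ≃ₐ[K] E, σ ^ n = 1)
    (m : ℕ) (x : Fin m → K)
    (hx_ind : AlgebraicIndependent ℚ x)
    (hx_alg : Algebra.IsAlgebraic (IntermediateField.adjoin ℚ (Set.range x)) K)
    (A : Subalgebra ℤ E) (hA : A = Algebra.adjoin ℤ (Set.range fun i => algebraMap K E (x i)))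
    (𝔪 : Ideal (integralClosure A E)) (h𝔪 : 𝔪.IsMaximal) :
    Finite ((integralClosure A E) ⧸ 𝔪) := by
  obtain ⟨n, hn1, hn⟩ := hexp
  obtain ⟨h1, h2, h3⟩ := aux_S K hKfg m x hx_ind hx_alg
  set A0 := Algebra.adjoin ℤ (Set.range x) with hA0
  let S := integralClosure A0 K
  have hmap : A = A0.map ((Algebra.ofId K E).restrictScalars ℤ) := by
    rw [hA, hA0, AlgHom.map_adjoin, ← Set.range_comp]
    rfl
  -- the two notions of integrality agree
  have i1 : ∀ e : E, IsIntegral A0 e ↔ IsIntegral A e := by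
    intro e
    have hto : ∀ a : A0, algebraMap K E a ∈ A := fun a => by
      rw [hmap]; exact ⟨a, a.2, rfl⟩
    let φ : A0 →+* A := ((algebraMap K E).comp A0.val.toRingHom).codRestrict A hto
    have hφ : Function.Surjective φ := by
      rintro ⟨a, ha⟩
      have ha' := ha
      rw [hmap] at ha'
      obtain ⟨b, hb, rfl⟩ := ha'
      exact ⟨⟨b, hb⟩, rfl⟩
    let := φ.toAlgebra
    have : IsScalarTower A0 A E := .of_algebraMap_eq fun a => rfl
    constructor
    · exact fun h => h.tower_top
    · intro h
      have : Algebra.IsIntegral A0 A := ⟨fun a => by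
        obtain ⟨b, rfl⟩ := hφ a
        exact isIntegral_algebraMap (R := A0) (x := b)⟩
      exact isIntegral_trans (R := A0) (A := A) e h
  have i2 : ∀ e : E, IsIntegral S e ↔ IsIntegral A e := by
    intro e
    rw [← i1]
    exact ⟨fun h => isIntegral_trans (R := A0) (A := S) e h, fun h => h.tower_top⟩
  let φ : S →+* integralClosure A E :=
    (algebraMap S E).codRestrict (integralClosure A E)
      fun s => (i2 _).mp isIntegral_algebraMap
  let := φ.toAlgebra
  have : IsScalarTower S (integralClosure A E) E := .of_algebraMap_eq fun a => rfl
  have : IsIntegralClosure (integralClosure A E) S E :=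
    { algebraMap_injective := Subtype.val_injective
      isIntegral_iff := fun {e} => by
        rw [i2]
        exact ⟨fun h => ⟨⟨e, h⟩, rfl⟩, fun ⟨y, hy⟩ => hy ▸ y.2⟩ }
  exact aux_main S K E (integralClosure A E) n hn1 hn 𝔪
end

section
/- Let K be a finitely generated extension of ℚ. Let E/K be a (possibly infinite) Galois field extension such that Gal(E/K) has finite exponent. Let x₁,…,x_m ∈ K be a transcendence base of K over ℚ, and let R be the integral closure in E of the subring ℤ[x₁,…,x_m] of E generated by x₁,…,x_m over ℤ. Then for every nonzero element f ∈ R there exist two maximal ideals 𝔪₁ and 𝔪₂ of R such that f ∉ 𝔪₁, f ∉ 𝔪₂, and the characteristic of the residue field R/𝔪₁ is different from the characteristic of the residue field R/𝔪₂. -/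
theorem aux_max {A R : Type*} [CommRing A] [CommRing R] [IsDomain R] [Algebra A R]
    [Algebra.IsIntegral A R] (hinj : Function.Injective (algebraMap A R)) (φ : A →+* ℤ) (c : A) (f : R)
    (hd : f ∣ algebraMap A R c) (p : ℕ) (hp : p.Prime) (hpc : ¬ (p : ℤ) ∣ φ c) :
    ∃ M : Ideal R, M.IsMaximal ∧ f ∉ M ∧ ringChar (R ⧸ M) = p := by
  have : Fact p.Prime := ⟨hp⟩
  let ψ : A →+* ZMod p := (Int.castRingHom (ZMod p)).comp φ
  have hs : Function.Surjective ψ := fun y => by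
    obtain ⟨n, rfl⟩ := ZMod.intCast_surjective y
    exact ⟨(n : A), by simp⟩
  have hmax : (RingHom.ker ψ).IsMaximal := RingHom.ker_isMaximal_of_surjective ψ hs
  obtain ⟨M, hM, hMc⟩ := Ideal.exists_ideal_over_maximal_of_isIntegral (S := R) (RingHom.ker ψ)
    (by
      rw [(RingHom.injective_iff_ker_eq_bot _).1 hinj]
      exact bot_le)
  refine ⟨M, hM, ?_, ?_⟩
  · intro hf
    have h1 : algebraMap A R c ∈ M := M.mem_of_dvd hd hf
    have h2 : c ∈ RingHom.ker ψ := by rw [← hMc]; exact h1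
    apply hpc
    rw [RingHom.mem_ker] at h2
    exact (ZMod.intCast_zmod_eq_zero_iff_dvd _ p).1 h2
  · have h3 : (p : A) ∈ M.comap (algebraMap A R) := by
      rw [hMc, RingHom.mem_ker]; simp
    have h4 : ((p : ℕ) : R ⧸ M) = 0 := by
      have : (p : R) ∈ M := by simpa using h3
      have := Ideal.Quotient.eq_zero_iff_mem.2 this
      simpa using this
    have : Nontrivial (R ⧸ M) := Ideal.Quotient.nontrivial_iff.2 hM.ne_top
    have h5 := (ringChar.spec (R ⧸ M) p).1 h4
    rcases (Nat.dvd_prime hp).1 h5 with h | h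
    · exact absurd h (CharP.ringChar_ne_one)
    · exact h

theorem aux_prime (z : ℤ) (hz : z ≠ 0) (N : ℕ) : ∃ p : ℕ, p.Prime ∧ N < p ∧ ¬ (p : ℤ) ∣ z := by
  obtain ⟨p, hp, hpp⟩ := Nat.exists_infinite_primes (N + z.natAbs + 1)
  refine ⟨p, hpp, by omega, fun h => ?_⟩
  have := Nat.le_of_dvd (Int.natAbs_pos.2 hz) (Int.natCast_dvd.1 h)
  omega

/-- Let `K` be a finitely generated extension of `ℚ` and `E/K` a Galois
extension whose Galois group has finite exponent. Let `x₁, …, x_m` be a transcendence base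
of `K/ℚ` and `R` the integral closure in `E` of the subring `ℤ[x₁, …, x_m]` of `E`.
Then for every nonzero `f ∈ R` there are maximal ideals `𝔪₁, 𝔪₂` of `R` avoiding `f`
whose residue fields have different characteristics. -/
theorem stmt3
    (K : Type*) [Field K] [Algebra ℚ K]
    (hKfg : ∃ s : Finset K, IntermediateField.adjoin ℚ (s : Set K) = ⊤)
    (E : Type*) [Field E] [Algebra K E] [Algebra ℚ E] [IsScalarTower ℚ K E]
    [IsGalois K E]
    (hexp : ∃ n : ℕ, 1 ≤ n ∧ ∀ σ : E ≃ₐ[K] E, σ ^ n = 1)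
    (m : ℕ) (x : Fin m → K)
    (hx_ind : AlgebraicIndependent ℚ x)
    (hx_alg : Algebra.IsAlgebraic (IntermediateField.adjoin ℚ (Set.range x)) K)
    (A : Subalgebra ℤ E) (hA : A = Algebra.adjoin ℤ (Set.range fun i => algebraMap K E (x i)))
    (f : integralClosure A E) (hf : f ≠ 0) :
    ∃ 𝔪₁ 𝔪₂ : Ideal (integralClosure A E), 𝔪₁.IsMaximal ∧ 𝔪₂.IsMaximal ∧
      f ∉ 𝔪₁ ∧ f ∉ 𝔪₂ ∧
      ringChar ((integralClosure A E) ⧸ 𝔪₁) ≠ ringChar ((integralClosure A E) ⧸ 𝔪₂) := by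
  subst hA
  have hind : AlgebraicIndependent ℤ (fun i => algebraMap K E (x i)) := by
    have h1 : AlgebraicIndependent ℤ x :=
      hx_ind.restrictScalars (R := ℤ) (by simpa using Int.cast_injective)
    exact h1.map' (f := (algebraMap K E).toIntAlgHom) (algebraMap K E).injective
  obtain ⟨c, hc, hd⟩ := (Algebra.IsIntegral.isIntegral
    (R := Algebra.adjoin ℤ (Set.range fun i => algebraMap K E (x i))) f).isAlgebraic.exists_nonzero_dvd
    (mem_nonZeroDivisors_of_ne_zero hf)
  have hq : hind.aevalEquiv.symm c ≠ 0 := by simpa using hc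
  obtain ⟨a, ha⟩ : ∃ a : Fin m → ℤ, MvPolynomial.eval a (hind.aevalEquiv.symm c) ≠ 0 := by
    by_contra! h
    exact hq (MvPolynomial.funext (by simpa using h))
  let φ : Algebra.adjoin ℤ (Set.range fun i => algebraMap K E (x i)) →+* ℤ :=
    (MvPolynomial.eval a).comp (hind.aevalEquiv.symm : _ →+* _)
  have hinj : Function.Injective (algebraMap
      (Algebra.adjoin ℤ (Set.range fun i => algebraMap K E (x i)))
      (integralClosure (Algebra.adjoin ℤ (Set.range fun i => algebraMap K E (x i))) E)) :=
    fun u v h => by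
      have h' := congrArg (fun z : integralClosure
        (Algebra.adjoin ℤ (Set.range fun i => algebraMap K E (x i))) E => (z : E)) h
      exact Subtype.ext h'
  obtain ⟨p, hp, -, hpc⟩ := aux_prime (φ c) ha 0
  obtain ⟨q, hq, hpq, hqc⟩ := aux_prime (φ c) ha p
  obtain ⟨M₁, h1, h2, h3⟩ := aux_max hinj φ c f hd p hp hpc
  obtain ⟨M₂, h4, h5, h6⟩ := aux_max hinj φ c f hd q hq hqc
  exact ⟨M₁, M₂, h1, h4, h2, h5, by rw [h3, h6]; omega⟩
end

section
/- Let K be a finitely generated extension of ℚ and let E/K be an algebraic Galois field extension. Let κ_E be the constant field of E and κ_K the constant field of K. Then the extension κ_E/κ_K is Galois and the extension κ_E·K/K (compositum taken inside E) is Galois. -/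
open IntermediateField

/-- Let `K` be a finitely generated extension of `ℚ` and `E/K` an algebraic
Galois extension. Let `κ_E` be the constant field of `E` (the algebraic closure of `ℚ` in
`E`) and `κ_K` the constant field of `K` (realized inside `E` as the image of the algebraic
closure of `ℚ` in `K`). Then `κ_E/κ_K` is Galois and `κ_E·K/K` is Galois. -/
theorem stmt4
    (K E : Type*) [Field K] [Field E] [Algebra ℚ K] [Algebra ℚ E] [Algebra K E]
    [IsScalarTower ℚ K E] [Algebra.IsAlgebraic K E] [IsGalois K E]
    (hKfg : ∃ s : Finset K, IntermediateField.adjoin ℚ (s : Set K) = ⊤) :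
    IsGalois ((algebraicClosure ℚ K).map (IsScalarTower.toAlgHom ℚ K E))
        (IntermediateField.extendScalars
          (algebraicClosure.map_le_of_algHom (IsScalarTower.toAlgHom ℚ K E))) ∧
      IsGalois K (IntermediateField.adjoin K ((algebraicClosure ℚ E : IntermediateField ℚ E) : Set E)) := by
  have hc : CharZero K := algebraRat.charZero K
  constructor
  · set A := (algebraicClosure ℚ K).map (IsScalarTower.toAlgHom ℚ K E) with hA
    set B := IntermediateField.extendScalars
          (algebraicClosure.map_le_of_algHom (IsScalarTower.toAlgHom ℚ K E)) with hB
    have hmem : ∀ x : E, x ∈ B ↔ IsIntegral ℚ x := fun x => Iff.rfl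
    have halg : Algebra.IsAlgebraic A B := by
      refine ⟨fun x => ?_⟩
      rw [IntermediateField.isAlgebraic_iff]
      exact (((hmem _).1 x.2).tower_top (A := A)).isAlgebraic
    have hn : Normal A B := by
      refine ⟨fun x => ?_⟩
      have hx : IsIntegral ℚ (x : E) := (hmem _).1 x.2
      have hxK : IsIntegral K (x : E) := hx.tower_top
      have hxA : IsIntegral A (x : E) := hx.tower_top
      have hl := integralClosure.mem_lifts_of_monic_of_dvd_map K (minpoly.monic hx)
        (minpoly.monic hxK) (minpoly.dvd_map_of_isScalarTower ℚ K (x : E))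
      have hl2 : (minpoly K (x : E)).map (algebraMap K E) ∈
          Polynomial.lifts (algebraMap A E) := by
        rw [Polynomial.lifts_iff_coeff_lifts] at hl ⊢
        intro n
        obtain ⟨c, hc⟩ := hl n
        rw [Polynomial.coeff_map, ← hc]
        exact ⟨⟨algebraMap K E c, ⟨c, c.2, rfl⟩⟩, rfl⟩
      obtain ⟨q, hq⟩ := (Polynomial.mem_lifts _).1 hl2
      have hdvd : minpoly A (x : E) ∣ q := by
        apply minpoly.dvd
        rw [← Polynomial.eval_map_algebraMap, hq, Polynomial.eval_map_algebraMap, minpoly.aeval]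
      have hsp : ((minpoly A (x : E)).map (algebraMap A E)).Splits := by
        refine Polynomial.Splits.of_dvd (IsGalois.splits K (x : E))
          (Polynomial.map_ne_zero (minpoly.ne_zero hxK)) ?_
        rw [← hq]
        exact Polynomial.map_dvd _ hdvd
      rw [show minpoly A x = minpoly A (x : E) from IntermediateField.minpoly_eq x]
      refine IntermediateField.splits_of_splits hsp fun y hy => ?_
      rw [hmem]
      refine ⟨minpoly ℚ (x : E), minpoly.monic hx, ?_⟩
      have h0 := Polynomial.aeval_eq_zero_of_dvd_aeval_eq_zero
        (minpoly.dvd_map_of_isScalarTower ℚ A (x : E)) (Polynomial.aeval_eq_zero_of_mem_rootSet hy)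
      rwa [Polynomial.aeval_map_algebraMap] at h0
    exact ⟨⟩
  · have hn : Normal K (IntermediateField.adjoin K
        ((algebraicClosure ℚ E : IntermediateField ℚ E) : Set E)) := by
      rw [IntermediateField.normal_iff_forall_map_le]
      intro σ
      rw [IntermediateField.adjoin_map, IntermediateField.adjoin_le_iff]
      rintro _ ⟨y, hy, rfl⟩
      apply IntermediateField.subset_adjoin
      exact (map_mem_algebraicClosure_iff (σ.restrictScalars ℚ)).2 hy
    exact ⟨⟩
end

section
/- Let K be a finitely generated extension of ℚ and let E/K be an algebraic Galois field extension. Let κ_E be the constant field of E and κ_K the constant field of K, and let κ_E·K be the compositum inside E. Then every automorphism of κ_E·K over K maps κ_E into itself, and the restriction homomorphism Aut(κ_E·K/K) → Aut(κ_E/κ_K), σ ↦ σ|_{κ_E}, is bijective. -/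
open IntermediateField
noncomputable section
set_option linter.unusedSectionVars false
set_option synthInstance.maxHeartbeats 400000
variable {K E : Type*} [Field K] [Field E] [Algebra ℚ K] [Algebra ℚ E] [Algebra K E]
  [IsScalarTower ℚ K E]
def constCompositum (K E : Type*) [Field K] [Field E] [Algebra ℚ E] [Algebra K E] : IntermediateField K E :=
  adjoin K ((algebraicClosure ℚ E : IntermediateField ℚ E) : Set E)
def constKE (K E : Type*) [Field K] [Field E] [Algebra ℚ K] [Algebra ℚ E] [Algebra K E]
  [IsScalarTower ℚ K E] : IntermediateField ℚ E :=
  (algebraicClosure ℚ K).map (IsScalarTower.toAlgHom ℚ K E)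
def constExt (K E : Type*) [Field K] [Field E] [Algebra ℚ K] [Algebra ℚ E] [Algebra K E]
  [IsScalarTower ℚ K E] : IntermediateField (constKE K E) E :=
  extendScalars (algebraicClosure.map_le_of_algHom (IsScalarTower.toAlgHom ℚ K E))
lemma mem_constCompositum {x : E} (hx : x ∈ algebraicClosure ℚ E) :
    x ∈ constCompositum K E := subset_adjoin K _ hx
lemma restrict_mem (σ : constCompositum K E ≃ₐ[K] constCompositum K E) {x : E}
    (hx : x ∈ algebraicClosure ℚ E) :
    ((σ ⟨x, mem_constCompositum hx⟩ : constCompositum K E) : E) ∈ algebraicClosure ℚ E := by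
  let ι : constCompositum K E →ₐ[ℚ] E := (constCompositum K E).val.restrictScalars ℚ
  let σ' : constCompositum K E →ₐ[ℚ] constCompositum K E :=
    (σ : constCompositum K E →ₐ[K] constCompositum K E).restrictScalars ℚ
  have h1 : (⟨x, mem_constCompositum hx⟩ : constCompositum K E)
      ∈ algebraicClosure ℚ (constCompositum K E) :=
    (map_mem_algebraicClosure_iff ι).mp hx
  have h2 : σ (⟨x, mem_constCompositum hx⟩ : constCompositum K E)
      ∈ algebraicClosure ℚ (constCompositum K E) :=
    (map_mem_algebraicClosure_iff σ').mpr h1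
  exact (map_mem_algebraicClosure_iff ι).mpr h2
lemma sigma_fix (σ : constCompositum K E ≃ₐ[K] constCompositum K E)
    (z : constCompositum K E) (y : K) (hz : (z : E) = algebraMap K E y) : σ z = z := by
  have hzy : z = algebraMap K (constCompositum K E) y := Subtype.ext hz
  rw [hzy, AlgEquiv.commutes]
def restrictAut (σ : constCompositum K E ≃ₐ[K] constCompositum K E) :
    constExt K E ≃ₐ[constKE K E] constExt K E where
  toFun x := ⟨(σ ⟨x.1, mem_constCompositum x.2⟩ : constCompositum K E),
    restrict_mem σ x.2⟩
  invFun x := ⟨(σ.symm ⟨x.1, mem_constCompositum x.2⟩ : constCompositum K E),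
    restrict_mem σ.symm x.2⟩
  left_inv x := by
    refine Subtype.ext ?_
    show ((σ.symm (⟨_, _⟩ : constCompositum K E) : constCompositum K E) : E) = (x : E)
    exact congrArg Subtype.val (σ.symm_apply_apply ⟨x.1, mem_constCompositum x.2⟩)
  right_inv x := by
    refine Subtype.ext ?_
    show ((σ (⟨_, _⟩ : constCompositum K E) : constCompositum K E) : E) = (x : E)
    exact congrArg Subtype.val (σ.apply_symm_apply ⟨x.1, mem_constCompositum x.2⟩)
  map_mul' x y := by
    refine Subtype.ext ?_
    show ((σ (⟨_, _⟩ : constCompositum K E) : constCompositum K E) : E)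
      = ((σ (⟨_, _⟩ : constCompositum K E) : constCompositum K E) : E)
        * ((σ (⟨_, _⟩ : constCompositum K E) : constCompositum K E) : E)
    exact congrArg Subtype.val
      (map_mul σ ⟨x.1, mem_constCompositum x.2⟩ ⟨y.1, mem_constCompositum y.2⟩)
  map_add' x y := by
    refine Subtype.ext ?_
    show ((σ (⟨_, _⟩ : constCompositum K E) : constCompositum K E) : E)
      = ((σ (⟨_, _⟩ : constCompositum K E) : constCompositum K E) : E)
        + ((σ (⟨_, _⟩ : constCompositum K E) : constCompositum K E) : E)
    exact congrArg Subtype.val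
      (map_add σ ⟨x.1, mem_constCompositum x.2⟩ ⟨y.1, mem_constCompositum y.2⟩)
  commutes' c := by
    obtain ⟨y, hy, hyx⟩ := c.2
    refine Subtype.ext ?_
    show ((σ (⟨_, _⟩ : constCompositum K E) : constCompositum K E) : E) = _
    exact congrArg Subtype.val (sigma_fix σ _ y hyx.symm)

lemma map_mem_alg (f : E →ₐ[ℚ] E) {x : E} (hx : x ∈ algebraicClosure ℚ E) :
    f x ∈ algebraicClosure ℚ E := (map_mem_algebraicClosure_iff f).mpr hx

lemma isGalois_compositum [IsGalois K E] : IsGalois K (constCompositum K E) := by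
  have hn : Normal K (constCompositum K E) := by
    rw [normal_iff_forall_map_le']
    intro σ
    unfold constCompositum
    rw [adjoin_map]
    apply adjoin.mono
    rintro _ ⟨x, hx, rfl⟩
    exact map_mem_alg ((σ : E →ₐ[K] E).restrictScalars ℚ) hx
  exact { to_normal := hn }

lemma mem_constKE {y : K} (h : algebraMap K E y ∈ algebraicClosure ℚ E) :
    algebraMap K E y ∈ constKE K E :=
  ⟨y, (map_mem_algebraicClosure_iff (IsScalarTower.toAlgHom ℚ K E)).mp h, rfl⟩

lemma mem_constExt {x : E} : x ∈ constExt K E ↔ x ∈ algebraicClosure ℚ E := Iff.rfl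

lemma root_mem_alg {x : E} (hx : x ∈ algebraicClosure ℚ E) {r : E}
    (hr : Polynomial.aeval r (minpoly K x) = 0) : r ∈ algebraicClosure ℚ E := by
  have hx' : IsAlgebraic ℚ x := mem_algebraicClosure_iff.mp hx
  have hd := minpoly.dvd_map_of_isScalarTower ℚ K x
  rw [mem_algebraicClosure_iff]
  refine ⟨minpoly ℚ x, minpoly.ne_zero hx'.isIntegral, ?_⟩
  obtain ⟨q, hq⟩ := hd
  rw [← Polynomial.aeval_map_algebraMap K r, hq, map_mul, hr, zero_mul]

lemma isGalois_const [IsGalois K E] : IsGalois (constKE K E) (constExt K E) := by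
  have hint : ∀ x : constExt K E, IsIntegral (constKE K E) x := by
    intro x
    have hx : IsIntegral ℚ (x : E) := (mem_algebraicClosure_iff.mp x.2).isIntegral
    have : IsIntegral (constKE K E) (x : E) := hx.tower_top
    exact (isIntegral_algHom_iff (constExt K E).val Subtype.val_injective).mp this
  have halg : Algebra.IsAlgebraic (constKE K E) (constExt K E) :=
    ⟨fun x => (hint x).isAlgebraic⟩
  have hn : Normal (constKE K E) (constExt K E) := by
    rw [normal_iff]
    intro x
    refine ⟨hint x, ?_⟩
    have hxE : (x : E) ∈ algebraicClosure ℚ E := x.2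
    have hxK : IsIntegral K (x : E) := Algebra.IsIntegral.isIntegral _
    have hs : ((minpoly K (x : E)).map (algebraMap K E)).Splits := Normal.splits inferInstance _
    have hroots : ∀ r ∈ ((minpoly K (x : E)).map (algebraMap K E)).roots,
        r ∈ algebraicClosure ℚ E := by
      intro r hr
      apply root_mem_alg (K := K) hxE
      rw [Polynomial.mem_roots', Polynomial.IsRoot, Polynomial.eval_map_algebraMap] at hr
      exact hr.2
    have hm : ((minpoly K (x : E)).map (algebraMap K E)).Monic := (minpoly.monic hxK).map _
    have hl := hs.mem_lift_of_roots_mem_range hm (algebraMap (algebraicClosure ℚ E) E)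
      (fun r hr => ⟨⟨r, hroots r hr⟩, rfl⟩)
    have hl' : (minpoly K (x : E)).map (algebraMap K E) ∈
        Polynomial.lifts (algebraMap (constKE K E) E) := by
      rw [Polynomial.lifts_iff_coeff_lifts] at hl ⊢
      intro n
      obtain ⟨c, hc⟩ := hl n
      rw [Polynomial.coeff_map] at hc ⊢
      exact ⟨⟨_, mem_constKE (hc ▸ c.2)⟩, rfl⟩
    rw [Polynomial.mem_lifts] at hl'
    obtain ⟨q, hq⟩ := hl'
    have hdvd : minpoly (constKE K E) (x : E) ∣ q := by
      apply minpoly.dvd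
      rw [← Polynomial.eval_map_algebraMap, hq, Polynomial.eval_map_algebraMap, minpoly.aeval]
    have hdvd' : (minpoly (constKE K E) (x : E)).map (algebraMap (constKE K E) E) ∣
        (minpoly K (x : E)).map (algebraMap K E) := hq ▸ Polynomial.map_dvd _ hdvd
    have hmin : minpoly (constKE K E) x = minpoly (constKE K E) (x : E) :=
      (minpoly.algHom_eq (constExt K E).val Subtype.val_injective x).symm
    rw [hmin]
    apply IntermediateField.splits_of_splits (hs.of_dvd hm.ne_zero hdvd')
    intro r hr
    apply hroots
    apply Multiset.mem_of_le (Polynomial.roots.le_of_dvd hm.ne_zero hdvd')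
    rw [Polynomial.mem_rootSet'] at hr
    rw [Polynomial.mem_roots', Polynomial.IsRoot, Polynomial.eval_map_algebraMap]
    exact hr
  exact { to_normal := hn }

lemma restrictAut_coe (σ : constCompositum K E ≃ₐ[K] constCompositum K E) (x : constExt K E) :
    ((restrictAut σ x : constExt K E) : E) =
      (σ ⟨x.1, mem_constCompositum x.2⟩ : constCompositum K E) := rfl

def restrictHom (K E : Type*) [Field K] [Field E] [Algebra ℚ K] [Algebra ℚ E] [Algebra K E]
    [IsScalarTower ℚ K E] :
    Gal(constCompositum K E/K) →* Gal(constExt K E/constKE K E) where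
  toFun σ := restrictAut σ
  map_one' := rfl
  map_mul' _ _ := rfl

lemma restrictHom_continuous [Algebra.IsAlgebraic K E] : Continuous (restrictHom K E) := by
  apply continuous_of_continuousAt_one _ (continuousAt_def.mpr _)
  intro N hN
  rw [map_one, krullTopology_mem_nhds_one_iff] at hN
  obtain ⟨M, _, hM⟩ := hN
  let b := Module.finBasis (constKE K E) M
  let s : Set (constCompositum K E) :=
    Set.range (fun i => ⟨((b i : constExt K E) : E), mem_constCompositum (b i : constExt K E).2⟩)
  rw [krullTopology_mem_nhds_one_iff]
  refine ⟨adjoin K s, ?_, ?_⟩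
  · have : Finite s := Set.finite_range _
    exact finiteDimensional_adjoin fun x _ => Algebra.IsIntegral.isIntegral x
  · intro σ hσ
    apply hM
    simp only [SetLike.mem_coe, IntermediateField.mem_fixingSubgroup_iff] at hσ ⊢
    have key : (restrictAut σ).toLinearMap ∘ₗ M.val.toLinearMap = M.val.toLinearMap := by
      apply b.ext
      intro i
      apply Subtype.ext
      have h1 := hσ _ (subset_adjoin K s ⟨i, rfl⟩)
      have h2 := congrArg (fun z : constCompositum K E => (z : E)) h1
      exact h2
    intro y hy
    exact LinearMap.congr_fun key ⟨y, hy⟩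

lemma restrictHom_surjective [IsGalois K E] : Function.Surjective (restrictHom K E) := by
  have := isGalois_compositum (K := K) (E := E)
  have := isGalois_const (K := K) (E := E)
  have hc : IsClosed ((restrictHom K E).range : Set Gal(constExt K E/constKE K E)) := by
    rw [MonoidHom.coe_range]
    exact (isCompact_range restrictHom_continuous).isClosed
  let H : ClosedSubgroup Gal(constExt K E/constKE K E) := ⟨(restrictHom K E).range, hc⟩
  have hfix : IntermediateField.fixedField (restrictHom K E).range = ⊥ := by
    rw [eq_bot_iff]
    intro x hx
    rw [IntermediateField.mem_fixedField_iff] at hx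
    have hx' : (⟨x.1, mem_constCompositum x.2⟩ : constCompositum K E) ∈
        Set.range (algebraMap K (constCompositum K E)) := by
      rw [InfiniteGalois.mem_range_algebraMap_iff_fixed]
      intro σ
      have h1 := congrArg (fun z : constExt K E => (z : E)) (hx (restrictHom K E σ) ⟨σ, rfl⟩)
      exact Subtype.ext h1
    obtain ⟨y, hy⟩ := hx'
    have hy' : algebraMap K E y = x.1 := congrArg Subtype.val hy
    rw [IntermediateField.mem_bot]
    refine ⟨⟨x.1, hy' ▸ mem_constKE (hy' ▸ x.2)⟩, rfl⟩
  have h := InfiniteGalois.fixingSubgroup_fixedField H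
  have h2 : (restrictHom K E).range = ⊤ := by
    rw [← IntermediateField.fixingSubgroup_bot, ← hfix]
    exact h.symm
  exact MonoidHom.range_eq_top.mp h2

lemma restrictAut_injective :
    Function.Injective (fun σ : constCompositum K E ≃ₐ[K] constCompositum K E => restrictAut σ) := by
  intro σ τ h
  have hx : ∀ x (hx : x ∈ algebraicClosure ℚ E),
      σ ⟨x, mem_constCompositum hx⟩ = τ ⟨x, mem_constCompositum hx⟩ := fun x hx =>
    Subtype.ext (congrArg (fun z : constExt K E => (z : E))
      (DFunLike.congr_fun h (⟨x, hx⟩ : constExt K E)))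
  have hh : (σ : constCompositum K E →ₐ[K] constCompositum K E) = τ := by
    refine IntermediateField.algHom_ext_of_eq_adjoin K
      (S := constCompositum K E) (s := (algebraicClosure ℚ E : Set E)) rfl ?_
    intro x hx'
    exact hx x hx'
  exact AlgEquiv.ext fun x => DFunLike.congr_fun hh x

/-- Let `K` be a finitely generated extension of `ℚ` and `E/K` an algebraic
Galois extension. Let `κ_E` be the constant field of `E` and `κ_K` the constant field of
`K` (realized inside `E`). Then every automorphism of `κ_E·K` over `K` maps `κ_E` into
itself, and the restriction homomorphism `Aut(κ_E·K/K) → Aut(κ_E/κ_K)`, `σ ↦ σ|_{κ_E}`,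
is bijective. -/
theorem stmt5
    (K E : Type*) [Field K] [Field E] [Algebra ℚ K] [Algebra ℚ E] [Algebra K E]
    [IsScalarTower ℚ K E] [Algebra.IsAlgebraic K E] [IsGalois K E]
    (hKfg : ∃ s : Finset K, IntermediateField.adjoin ℚ (s : Set K) = ⊤) :
    (∀ (σ : constCompositum K E ≃ₐ[K] constCompositum K E) (x : constCompositum K E),
      (x : E) ∈ algebraicClosure ℚ E →
        ((σ x : constCompositum K E) : E) ∈ algebraicClosure ℚ E) ∧
    Function.Bijective
      (fun σ : constCompositum K E ≃ₐ[K] constCompositum K E => restrictAut σ) := by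
  refine ⟨fun σ x hx => restrict_mem σ hx, restrictAut_injective, ?_⟩
  exact restrictHom_surjective

end
end

section
/- Let K be a finitely generated extension of ℚ and let E/K be an algebraic Galois field extension. Fix an algebraic closure Ẽ of E and let Q̃ be the algebraic closure of ℚ inside Ẽ; let κ_E be the constant field of E, and form the composita Q̃·E, Q̃·K and κ_E·K inside Ẽ. Then Q̃·E is Galois over Q̃·K, E is Galois over κ_E·K, every automorphism of Q̃·E over Q̃·K maps E into itself, and the restriction homomorphism Gal(Q̃·E/Q̃·K) → Gal(E/κ_E·K), σ ↦ σ|_E, is bijective. -/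
open IntermediateField

noncomputable section
set_option linter.unusedSectionVars false
set_option synthInstance.maxHeartbeats 400000

variable (K E Et : Type*) [Field K] [Field E] [Field Et]
  [Algebra ℚ K] [Algebra ℚ E] [Algebra ℚ Et]
  [Algebra K E] [Algebra E Et] [Algebra K Et]
  [IsScalarTower ℚ K E] [IsScalarTower ℚ E Et] [IsScalarTower K E Et]
  [IsScalarTower ℚ K Et]

/-- The image of `E` inside the algebraic closure `Ẽ`. -/
def Eimg : IntermediateField ℚ Et := (IsScalarTower.toAlgHom ℚ E Et).fieldRange

/-- The image of `K` inside the algebraic closure `Ẽ`. -/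
def Kimg : IntermediateField ℚ Et := (IsScalarTower.toAlgHom ℚ K Et).fieldRange

/-- The compositum `Q̃·E` inside `Ẽ`, where `Q̃ = algebraicClosure ℚ Ẽ`. -/
def QE : IntermediateField ℚ Et := algebraicClosure ℚ Et ⊔ Eimg E Et

/-- The compositum `Q̃·K` inside `Ẽ`. -/
def QK : IntermediateField ℚ Et := algebraicClosure ℚ Et ⊔ Kimg K Et

/-- The compositum `κ_E·K` inside `Ẽ`, where `κ_E` is the constant field of `E`. -/
def kEK : IntermediateField ℚ Et :=
  (algebraicClosure ℚ E).map (IsScalarTower.toAlgHom ℚ E Et) ⊔ Kimg K Et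

lemma Kimg_le_Eimg : Kimg K Et ≤ Eimg E Et := by
  rintro x hx
  obtain ⟨y, rfl⟩ := hx
  exact ⟨algebraMap K E y, by
    simp [Eimg, IsScalarTower.toAlgHom_apply, ← IsScalarTower.algebraMap_apply]⟩

lemma QK_le_QE : QK K Et ≤ QE E Et :=
  sup_le_sup_left (Kimg_le_Eimg K E Et) _

lemma kEK_le_Eimg : kEK K E Et ≤ Eimg E Et := by
  refine sup_le ?_ (Kimg_le_Eimg K E Et)
  rintro x hx
  obtain ⟨y, hy, rfl⟩ := hx
  exact ⟨y, rfl⟩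

lemma kEK_le_QK : kEK K E Et ≤ QK K Et :=
  sup_le ((algebraicClosure.map_le_of_algHom (IsScalarTower.toAlgHom ℚ E Et)).trans le_sup_left)
    le_sup_right

lemma Eimg_le_QE : Eimg E Et ≤ QE E Et := le_sup_right

/-- `Q̃·E` viewed as an extension of `Q̃·K`. -/
def QEext : IntermediateField (QK K Et) Et := extendScalars (QK_le_QE K E Et)

/-- `E` (inside `Ẽ`) viewed as an extension of `κ_E·K`. -/
def Eext : IntermediateField (kEK K E Et) Et := extendScalars (kEK_le_Eimg K E Et)

variable {K E Et}


lemma restrict6_mem_aux [Algebra.IsAlgebraic K E] [IsGalois K E]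
    (σ : QEext K E Et ≃ₐ[QK K Et] QEext K E Et) (y : E) (m : QEext K E Et)
    (hm : (m : Et) = algebraMap E Et y) :
    ((σ m : QEext K E Et) : Et) ∈ Eimg E Et := by
  have hyI : IsIntegral K y := (Algebra.IsAlgebraic.isAlgebraic (R := K) y).isIntegral
  set p := minpoly K y with hpdef
  have hp0 : p ≠ 0 := minpoly.ne_zero hyI
  have hKQK : ∀ k : K, algebraMap K Et k ∈ QK K Et := by
    intro k
    exact (le_sup_right : Kimg K Et ≤ QK K Et) ⟨k, rfl⟩
  let φ0 : K →+* ↥(QK K Et) := (algebraMap K Et).codRestrict _ hKQK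
  let φ : K →+* ↥(QEext K E Et) :=
    (algebraMap ↥(QK K Et) ↥(QEext K E Et)).comp φ0
  let ι : ↥(QEext K E Et) →+* Et := (QEext K E Et).val.toRingHom
  have hιφ : ι.comp φ = algebraMap K Et := RingHom.ext fun k => rfl
  have hbase : Polynomial.eval₂ (algebraMap K Et) (algebraMap E Et y) p = 0 := by
    have h := Polynomial.hom_eval₂ p (algebraMap K E) (algebraMap E Et) y
    rw [← IsScalarTower.algebraMap_eq] at h
    have : Polynomial.eval₂ (algebraMap K E) y p = 0 := minpoly.aeval K y
    rw [this, map_zero] at h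
    exact h.symm
  have h1 : Polynomial.eval₂ φ m p = 0 := by
    apply Subtype.ext
    have h := Polynomial.hom_eval₂ p φ ι m
    rw [hιφ] at h
    show ι (Polynomial.eval₂ φ m p) = (0 : Et)
    rw [h]
    show Polynomial.eval₂ (algebraMap K Et) (m : Et) p = 0
    rw [hm]
    exact hbase
  have h2 : Polynomial.eval₂ φ (σ m) p = 0 := by
    have h := Polynomial.hom_eval₂ p φ (σ.toAlgHom.toRingHom) m
    have hcomp : (σ.toAlgHom.toRingHom).comp φ = φ := by
      refine RingHom.ext fun k => ?_
      show σ (φ k) = φ k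
      exact σ.commutes (φ0 k)
    rw [hcomp, h1, map_zero] at h
    exact h.symm
  have hroot : (p.map (algebraMap K Et)).IsRoot ((σ m : QEext K E Et) : Et) := by
    rw [Polynomial.IsRoot, Polynomial.eval_map]
    have h := Polynomial.hom_eval₂ p φ ι (σ m)
    rw [hιφ, h2, map_zero] at h
    exact h.symm
  have hsp : Polynomial.Splits (p.map (algebraMap K E)) := Normal.splits inferInstance y
  set q := p.map (algebraMap K E) with hqdef
  have hq : Polynomial.Splits q := hsp
  have hmaps : p.map (algebraMap K Et) = q.map (algebraMap E Et) := by
    rw [hqdef, Polynomial.map_map, ← IsScalarTower.algebraMap_eq]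
  have hq0 : q.map (algebraMap E Et) ≠ 0 := by
    rw [← hmaps]
    exact Polynomial.map_ne_zero hp0
  have hzroots : ((σ m : QEext K E Et) : Et) ∈ (q.map (algebraMap E Et)).roots := by
    rw [Polynomial.mem_roots hq0, ← hmaps]
    exact hroot
  rw [hq.roots_map, Multiset.mem_map] at hzroots
  obtain ⟨w, _, hwz⟩ := hzroots
  exact ⟨w, hwz⟩

/-- Every automorphism of `Q̃·E` over `Q̃·K` maps `E` into itself. -/
lemma restrict6_mem [Algebra.IsAlgebraic K E] [IsGalois K E]
    (σ : QEext K E Et ≃ₐ[QK K Et] QEext K E Et) {x : Et}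
    (hx : x ∈ Eimg E Et) :
    ((σ ⟨x, Eimg_le_QE E Et hx⟩ : QEext K E Et) : Et) ∈ Eimg E Et := by
  obtain ⟨y, hy⟩ := id hx
  exact restrict6_mem_aux σ y ⟨x, Eimg_le_QE E Et hx⟩ hy.symm

/-- The restriction of an automorphism of `Q̃·E` over `Q̃·K` to an automorphism of `E`
over `κ_E·K`. -/
def restrictAut6 [Algebra.IsAlgebraic K E] [IsGalois K E] (σ : QEext K E Et ≃ₐ[QK K Et] QEext K E Et) :
    Eext K E Et ≃ₐ[kEK K E Et] Eext K E Et where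
  toFun x := ⟨(σ ⟨x.1, Eimg_le_QE E Et x.2⟩ : QEext K E Et), restrict6_mem σ x.2⟩
  invFun x := ⟨(σ.symm ⟨x.1, Eimg_le_QE E Et x.2⟩ : QEext K E Et),
    restrict6_mem σ.symm x.2⟩
  left_inv x := by
    refine Subtype.ext ?_
    show ((σ.symm (⟨_, _⟩ : QEext K E Et) : QEext K E Et) : Et) = (x : Et)
    exact congrArg Subtype.val (σ.symm_apply_apply ⟨x.1, Eimg_le_QE E Et x.2⟩)
  right_inv x := by
    refine Subtype.ext ?_
    show ((σ (⟨_, _⟩ : QEext K E Et) : QEext K E Et) : Et) = (x : Et)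
    exact congrArg Subtype.val (σ.apply_symm_apply ⟨x.1, Eimg_le_QE E Et x.2⟩)
  map_mul' x y := by
    refine Subtype.ext ?_
    show ((σ (⟨_, _⟩ : QEext K E Et) : QEext K E Et) : Et)
      = ((σ (⟨_, _⟩ : QEext K E Et) : QEext K E Et) : Et)
        * ((σ (⟨_, _⟩ : QEext K E Et) : QEext K E Et) : Et)
    exact congrArg Subtype.val
      (map_mul σ ⟨x.1, Eimg_le_QE E Et x.2⟩ ⟨y.1, Eimg_le_QE E Et y.2⟩)
  map_add' x y := by
    refine Subtype.ext ?_
    show ((σ (⟨_, _⟩ : QEext K E Et) : QEext K E Et) : Et)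
      = ((σ (⟨_, _⟩ : QEext K E Et) : QEext K E Et) : Et)
        + ((σ (⟨_, _⟩ : QEext K E Et) : QEext K E Et) : Et)
    exact congrArg Subtype.val
      (map_add σ ⟨x.1, Eimg_le_QE E Et x.2⟩ ⟨y.1, Eimg_le_QE E Et y.2⟩)
  commutes' c := by
    refine Subtype.ext ?_
    show ((σ (⟨_, _⟩ : QEext K E Et) : QEext K E Et) : Et) = _
    exact congrArg Subtype.val (σ.commutes ⟨c.1, kEK_le_QK K E Et c.2⟩)

section helpers6

/-- the equalizer of two endomorphisms, as an intermediate field -/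
def eqField6 {Et : Type*} [Field Et] [Algebra ℚ Et] (f g : Et →+* Et) :
    IntermediateField ℚ Et :=
  (f.eqLocusField g).toIntermediateField (fun q => by
    show f (algebraMap ℚ Et q) = g (algebraMap ℚ Et q)
    rw [← RingHom.comp_apply, ← RingHom.comp_apply]
    exact congrFun (congrArg _ (Subsingleton.elim _ _)) q)

lemma isAlgClosure_of_Kimg_le {K E Et : Type*} [Field K] [Field E] [Field Et]
    [Algebra ℚ K] [Algebra ℚ E] [Algebra ℚ Et]
    [Algebra K E] [Algebra E Et] [Algebra K Et]
    [IsScalarTower ℚ K E] [IsScalarTower ℚ E Et] [IsScalarTower K E Et]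
    [IsScalarTower ℚ K Et]
    [Algebra.IsAlgebraic K E] [IsAlgClosure E Et] (F : IntermediateField ℚ Et)
    (hF : Kimg K Et ≤ F) : IsAlgClosure F Et := by
  have h1 : Algebra.IsAlgebraic E Et := IsAlgClosure.isAlgebraic
  have h2 : Algebra.IsAlgebraic K Et := Algebra.IsAlgebraic.trans K E Et
  letI : Algebra K F :=
    ((algebraMap K Et).codRestrict F (fun k => hF ⟨k, rfl⟩)).toAlgebra
  haveI : IsScalarTower K F Et := IsScalarTower.of_algebraMap_eq (fun _ => rfl)
  exact ⟨IsAlgClosure.isAlgClosed E, Algebra.IsAlgebraic.tower_top (K := K) F⟩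

lemma hom_mem_Eimg {K E Et : Type*} [Field K] [Field E] [Field Et]
    [Algebra ℚ K] [Algebra ℚ E] [Algebra ℚ Et]
    [Algebra K E] [Algebra E Et] [Algebra K Et]
    [IsScalarTower ℚ K E] [IsScalarTower ℚ E Et] [IsScalarTower K E Et]
    [IsScalarTower ℚ K Et] [IsGalois K E] (f : Et →+* Et)
    (hf : ∀ x ∈ Kimg K Et, f x = x) {x : Et} (hx : x ∈ Eimg E Et) : f x ∈ Eimg E Et := by
  obtain ⟨y, rfl⟩ := hx
  let g : Et →ₐ[K] Et := { f with commutes' := fun k => hf _ ⟨k, rfl⟩ }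
  exact ⟨g.restrictNormal E y, g.restrictNormal_commutes E y⟩

lemma exists_lift_gal {k L M : Type*} [Field k] [Field L] [Field M] [Algebra k L]
    [Algebra k M] [Algebra L M] [IsScalarTower k L M] (A : IntermediateField k M)
    [IsGalois k A] [IsGalois L M]
    (h : ∀ y : L, algebraMap L M y ∈ A → y ∈ Set.range (algebraMap k L))
    (g : Gal(A/k)) : ∃ S : Gal(M/L), ∀ x : A, S x = g x := by
  let r := restrictRestrictAlgEquivMapHom k A L M
  have hr : ∀ (φ : Gal(M/L)) (x : A), ((r φ x : A) : M) = φ x := by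
    intro φ x
    exact AlgEquiv.restrictNormal_commutes _ A x
  have hc : Continuous r := by
    refine continuous_of_continuousAt_one r ?_
    intro s hs
    rw [map_one, krullTopology_mem_nhds_one_iff] at hs
    obtain ⟨N, hN, hNs⟩ := hs
    rw [Filter.mem_map, krullTopology_mem_nhds_one_iff]
    let b := Module.finBasis k N
    let T : Set M := Set.range (fun i => ((b i : A) : M))
    refine ⟨adjoin L T, ?_, ?_⟩
    · haveI : Finite T := Set.finite_range _
      exact finiteDimensional_adjoin fun x _ => Algebra.IsIntegral.isIntegral x
    · intro φ hφ
      apply hNs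
      have hφ' : ∀ x ∈ adjoin L T, φ x = x := fun x hx => hφ ⟨x, hx⟩
      intro x
      have hx : x ∈ Submodule.span k (Set.range b) := by rw [b.span_eq]; trivial
      show r φ (x : A) = x
      induction hx using Submodule.span_induction with
      | mem x hx =>
        obtain ⟨i, rfl⟩ := hx
        apply Subtype.ext
        rw [hr]
        exact hφ' _ (subset_adjoin _ _ ⟨i, rfl⟩)
      | zero => simp
      | add x y _ _ hx hy => 
        have := congrArg₂ (· + ·) hx hy
        simpa using this
      | smul a x _ hx =>
        have := congrArg (a • ·) hx
        simpa using this
  have hcl : IsClosed r.range.carrier := by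
    have : IsCompact (Set.range r) := isCompact_range hc
    exact this.isClosed
  let H : ClosedSubgroup Gal(A/k) :=
    { r.range with isClosed' := hcl }
  have hH := InfiniteGalois.fixingSubgroup_fixedField H
  have hbot : fixedField H.1 = ⊥ := by
    refine eq_bot_iff.mpr fun x hx => ?_
    rw [mem_fixedField_iff] at hx
    have : (x : M) ∈ Set.range (algebraMap L M) := by
      rw [InfiniteGalois.mem_range_algebraMap_iff_fixed]
      intro φ
      rw [← hr, hx (r φ) ⟨φ, rfl⟩]
    obtain ⟨y, hy⟩ := this
    obtain ⟨z, rfl⟩ := h y (hy ▸ x.2)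
    refine mem_bot.mpr ⟨z, Subtype.ext ?_⟩
    rw [← hy, ← IsScalarTower.algebraMap_apply]
    rfl
  have hg : g ∈ H.1 := by
    rw [← hH]
    erw [hbot, fixingSubgroup_bot]
    trivial
  obtain ⟨S, hS⟩ := hg
  exact ⟨S, fun x => by rw [← hS]; exact (hr S x).symm⟩

/-- an automorphism of `Et` agrees on the algebraic numbers with one fixing `E` -/
lemma exists_fix_E {E Et : Type*} [Field E] [Field Et] [Algebra ℚ E] [Algebra ℚ Et]
    [Algebra E Et] [IsScalarTower ℚ E Et] [IsAlgClosure E Et] (T : Et ≃+* Et)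
    (hT : ∀ y ∈ algebraicClosure ℚ E, T (algebraMap E Et y) = algebraMap E Et y) :
    ∃ S : Gal(Et/E), ∀ x ∈ algebraicClosure ℚ Et, S x = T x := by
  haveI : IsAlgClosed Et := IsAlgClosure.isAlgClosed E
  haveI : CharZero E := algebraRat.charZero E
  let k := algebraicClosure ℚ E
  haveI : CharZero k := algebraRat.charZero k
  haveI : IsScalarTower ℚ k Et := IsScalarTower.of_algebraMap_eq fun q => by
    rw [IsScalarTower.algebraMap_apply k E Et, ← IsScalarTower.algebraMap_apply ℚ k E,
      ← IsScalarTower.algebraMap_apply ℚ E Et]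
  let A := algebraicClosure k Et
  let T' : Gal(Et/k) := { T with commutes' := fun c => hT c c.2 }
  haveI : Algebra.IsAlgebraic ℚ k := by
    convert! algebraicClosure.isAlgebraic ℚ E
    exact Subsingleton.elim _ _
  obtain ⟨S, hS⟩ := exists_lift_gal (L := E) A (by
    intro y hy
    have hy1 : IsAlgebraic k (algebraMap E Et y) := mem_algebraicClosure_iff.mp hy
    have hy2 : IsAlgebraic ℚ (algebraMap E Et y) := hy1.restrictScalars ℚ
    have hy3 : IsAlgebraic ℚ y :=
      (isAlgebraic_algebraMap_iff (algebraMap E Et).injective).mp hy2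
    exact ⟨⟨y, mem_algebraicClosure_iff.mpr hy3⟩, rfl⟩) (T'.restrictNormal A)
  refine ⟨S, fun x hx => ?_⟩
  have hxA : x ∈ A := mem_algebraicClosure_iff.mpr
    ((mem_algebraicClosure_iff.mp hx).tower_top k)
  rw [hS ⟨x, hxA⟩]
  exact T'.restrictNormal_commutes A ⟨x, hxA⟩

end helpers6

/-- Let `K` be a finitely generated extension of `ℚ`, `E/K` an algebraic
Galois extension and `Ẽ` an algebraic closure of `E`. Let `Q̃` be the algebraic closure of
`ℚ` in `Ẽ` and `κ_E` the constant field of `E`. Then `Q̃·E/Q̃·K` is Galois, `E/κ_E·K` is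
Galois, every automorphism of `Q̃·E` over `Q̃·K` maps `E` into itself, and the restriction
homomorphism `Gal(Q̃·E/Q̃·K) → Gal(E/κ_E·K)`, `σ ↦ σ|_E`, is bijective. -/
theorem stmt6
    (K E Et : Type*) [Field K] [Field E] [Field Et]
    [Algebra ℚ K] [Algebra ℚ E] [Algebra ℚ Et]
    [Algebra K E] [Algebra E Et] [Algebra K Et]
    [IsScalarTower ℚ K E] [IsScalarTower ℚ E Et] [IsScalarTower K E Et]
    [IsScalarTower ℚ K Et]
    [Algebra.IsAlgebraic K E] [IsGalois K E] [IsAlgClosure E Et]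
    (hKfg : ∃ s : Finset K, IntermediateField.adjoin ℚ (s : Set K) = ⊤) :
    IsGalois (QK K Et) (QEext K E Et) ∧
    IsGalois (kEK K E Et) (Eext K E Et) ∧
    (∀ (σ : QEext K E Et ≃ₐ[QK K Et] QEext K E Et) (x : QEext K E Et),
      (x : Et) ∈ Eimg E Et → ((σ x : QEext K E Et) : Et) ∈ Eimg E Et) ∧
    Function.Bijective
      (fun σ : QEext K E Et ≃ₐ[QK K Et] QEext K E Et => restrictAut6 σ) := by
  haveI : IsAlgClosed Et := IsAlgClosure.isAlgClosed E
  have hKQ : Kimg K Et ≤ QK K Et := le_sup_right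
  have hKk : Kimg K Et ≤ kEK K E Et := le_sup_right
  haveI : IsAlgClosure (QK K Et) Et := isAlgClosure_of_Kimg_le (K := K) (E := E) _ hKQ
  haveI : IsAlgClosure (kEK K E Et) Et := isAlgClosure_of_Kimg_le (K := K) (E := E) _ hKk
  haveI : CharZero (QK K Et) := algebraRat.charZero _
  haveI : CharZero (kEK K E Et) := algebraRat.charZero _
  haveI : IsGalois (QK K Et) Et := inferInstance
  haveI : IsGalois (kEK K E Et) Et := inferInstance
  have key : ∀ (f : Et →ₐ[QK K Et] Et), ∀ x ∈ QE E Et, f x ∈ QE E Et := by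
    intro f
    have : QE E Et ≤ (QE E Et).comap (f.restrictScalars ℚ) := by
      refine sup_le (fun x hx => ?_) (fun x hx => ?_)
      · show f x ∈ QE E Et
        have hx' : x ∈ QK K Et := (le_sup_left : algebraicClosure ℚ Et ≤ QK K Et) hx
        have : f x = x := f.commutes ⟨x, hx'⟩
        rw [this]
        exact (le_sup_left : algebraicClosure ℚ Et ≤ QE E Et) hx
      · exact Eimg_le_QE E Et (hom_mem_Eimg (K := K) f.toRingHom
          (fun x hx => f.commutes ⟨x, hKQ hx⟩) hx)
    exact this
  haveI n1 : Normal (QK K Et) (QEext K E Et) := by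
    rw [normal_iff_forall_map_le]
    rintro f x ⟨y, hy, rfl⟩
    exact key f y hy
  haveI n2 : Normal (kEK K E Et) (Eext K E Et) := by
    rw [normal_iff_forall_map_le]
    rintro f x ⟨y, hy, rfl⟩
    exact hom_mem_Eimg (K := K) f.toRingHom (fun x hx => f.commutes ⟨x, hKk hx⟩) hy
  refine ⟨⟨⟩, ⟨⟩, fun σ x hx => restrict6_mem σ hx, ?_, ?_⟩
  · intro σ τ h
    have hE : ∀ x (hx : x ∈ Eimg E Et), σ ⟨x, Eimg_le_QE E Et hx⟩ = τ ⟨x, Eimg_le_QE E Et hx⟩ := by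
      intro x hx
      have := congrArg (fun ρ : Eext K E Et ≃ₐ[kEK K E Et] Eext K E Et =>
        ((ρ ⟨x, hx⟩ : Eext K E Et) : Et)) h
      exact Subtype.ext this
    let f : Et →ₐ[QK K Et] Et := (σ.liftNormal Et).toAlgHom
    let g : Et →ₐ[QK K Et] Et := (τ.liftNormal Et).toAlgHom
    have hf : ∀ x : QEext K E Et, f x = σ x := fun x => σ.liftNormal_commutes Et x
    have hg : ∀ x : QEext K E Et, g x = τ x := fun x => τ.liftNormal_commutes Et x
    have hle : QE E Et ≤ eqField6 f.toRingHom g.toRingHom := by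
      refine sup_le (fun x hx => ?_) (fun x hx => ?_)
      · have hx' : x ∈ QK K Et := (le_sup_left : algebraicClosure ℚ Et ≤ QK K Et) hx
        exact (f.commutes ⟨x, hx'⟩).trans (g.commutes ⟨x, hx'⟩).symm
      · show f x = g x
        have h1 := hf ⟨x, Eimg_le_QE E Et hx⟩
        have h2 := hg ⟨x, Eimg_le_QE E Et hx⟩
        rw [hE x hx] at h1
        exact h1.trans h2.symm
    ext x
    rw [← hf, ← hg]
    exact hle x.2
  · intro τ
    let T := τ.liftNormal Et
    have hTτ : ∀ x : Eext K E Et, T x = τ x := fun x => τ.liftNormal_commutes Et x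
    obtain ⟨S, hS⟩ := exists_fix_E (E := E) T.toRingEquiv (by
      intro y hy
      exact T.commutes ⟨algebraMap E Et y,
        (le_sup_left : (algebraicClosure ℚ E).map (IsScalarTower.toAlgHom ℚ E Et) ≤ kEK K E Et)
          ⟨y, hy, rfl⟩⟩)
    have hSE : ∀ x ∈ Eimg E Et, S.symm x = x := by
      rintro x ⟨y, rfl⟩
      exact S.symm.commutes y
    let Φ0 : Et ≃+* Et := T.toRingEquiv.trans S.symm.toRingEquiv
    have hΦ0 : ∀ x, Φ0 x = S.symm (T x) := fun _ => rfl
    have hle : QK K Et ≤ eqField6 Φ0.toRingHom (RingHom.id Et) := by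
      refine sup_le (fun x hx => ?_) (fun x hx => ?_)
      · show Φ0 x = x
        have h1 : S x = T x := hS x hx
        rw [hΦ0, ← h1, S.symm_apply_apply]
      · show Φ0 x = x
        have h1 : T x = x := T.commutes ⟨x, hKk hx⟩
        rw [hΦ0, h1]
        exact hSE x (Kimg_le_Eimg K E Et hx)
    let Φ : Et ≃ₐ[QK K Et] Et := { Φ0 with commutes' := fun c => hle c.2 }
    refine ⟨Φ.restrictNormal (QEext K E Et), ?_⟩
    ext x
    have h1 := Φ.restrictNormal_commutes (QEext K E Et) ⟨x.1, Eimg_le_QE E Et x.2⟩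
    have h2 : Φ x.1 = τ x := by
      show S.symm (T x) = _
      rw [hTτ]
      exact hSE _ (τ x).2
    exact h1.trans h2

end
end

section
/- Let ℓ be a prime number and n ≥ 1 an integer. Let r : GL_n(ℤ_ℓ) → GL_n(𝔽_ℓ) be the group homomorphism induced by the reduction ring homomorphism ℤ_ℓ → 𝔽_ℓ from the ring of ℓ-adic integers to the field with ℓ elements. Then the kernel of r is a pro-ℓ group: every open subgroup of ker(r) (with the topology induced from GL_n(ℤ_ℓ)) has index a power of ℓ. -/
open Matrix

lemma aux_pow (ℓ : ℕ) [Fact ℓ.Prime] (n : ℕ) (A : Matrix (Fin n) (Fin n) ℤ_[ℓ]) (k : ℕ) :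
    ∃ B : Matrix (Fin n) (Fin n) ℤ_[ℓ], (1 + (ℓ : ℤ_[ℓ]) • A) ^ (ℓ ^ k) = 1 + ((ℓ : ℤ_[ℓ]) ^ (k+1)) • B := by
  have h : ((ℓ : Polynomial ℤ_[ℓ])) ∣ (1 + (ℓ : Polynomial ℤ_[ℓ]) * Polynomial.X) - 1 := ⟨Polynomial.X, by ring⟩
  obtain ⟨q, hq⟩ := dvd_sub_pow_of_dvd_sub h k
  refine ⟨Polynomial.aeval A q, ?_⟩
  have := congrArg (Polynomial.aeval A) hq
  simp only [map_sub, map_pow, map_add, map_mul, map_one, Polynomial.aeval_X, map_natCast, one_pow] at this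
  rw [sub_eq_iff_eq_add'] at this
  have e : ∀ C : Matrix (Fin n) (Fin n) ℤ_[ℓ], (ℓ : ℤ_[ℓ]) • C = (ℓ : Matrix (Fin n) (Fin n) ℤ_[ℓ]) * C := by
    intro C
    rw [← nsmul_eq_mul, Nat.cast_smul_eq_nsmul]
  have e2 : ∀ C : Matrix (Fin n) (Fin n) ℤ_[ℓ], (ℓ : ℤ_[ℓ])^(k+1) • C = (ℓ : Matrix (Fin n) (Fin n) ℤ_[ℓ])^(k+1) * C := by
    intro C
    rw [← Nat.cast_pow, ← Nat.cast_pow, ← nsmul_eq_mul, Nat.cast_smul_eq_nsmul]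
  rw [e, e2, this]

lemma aux_cong (ℓ : ℕ) [Fact ℓ.Prime] (n m : ℕ) (g : GL (Fin n) ℤ_[ℓ])
    (h : Matrix.GeneralLinearGroup.map (PadicInt.toZModPow (p := ℓ) m) g = 1) (i j : Fin n) :
    ‖(g : Matrix (Fin n) (Fin n) ℤ_[ℓ]) i j - (1 : Matrix (Fin n) (Fin n) ℤ_[ℓ]) i j‖ ≤ (ℓ : ℝ) ^ (-m : ℤ) := by
  rw [PadicInt.norm_le_pow_iff_mem_span_pow, ← PadicInt.ker_toZModPow, RingHom.mem_ker, map_sub]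
  have := congrArg (fun x : GL (Fin n) (ZMod (ℓ^m)) => x.val i j) h
  simp only [Matrix.GeneralLinearGroup.map_apply] at this
  rw [this, sub_eq_zero]
  by_cases hij : i = j <;> simp [Matrix.one_apply, hij]

lemma aux_tendsto (ℓ : ℕ) [Fact ℓ.Prime] (n : ℕ) (g : ℕ → GL (Fin n) ℤ_[ℓ])
    (h : ∀ m, Matrix.GeneralLinearGroup.map (PadicInt.toZModPow (p := ℓ) m) (g m) = 1) :
    Filter.Tendsto (fun m => (g m : Matrix (Fin n) (Fin n) ℤ_[ℓ])) Filter.atTop (nhds 1) := by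
  refine tendsto_pi_nhds.2 fun i => tendsto_pi_nhds.2 fun j => ?_
  rw [tendsto_iff_norm_sub_tendsto_zero]
  refine squeeze_zero (fun _ => norm_nonneg _) (fun m => aux_cong ℓ n m (g m) (h m) i j) ?_
  have hl : 1 < (ℓ : ℝ) := by exact_mod_cast (Fact.out : ℓ.Prime).one_lt
  have := tendsto_pow_atTop_nhds_zero_of_lt_one (r := (ℓ : ℝ)⁻¹) (by positivity) (inv_lt_one_of_one_lt₀ hl)
  simpa using this

/-- The kernel of the reduction map `GL_n(ℤ_ℓ) → GL_n(𝔽_ℓ)` is a pro-ℓ group: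
every open subgroup of the kernel has index a power of `ℓ`. -/
theorem stmt7
    (ℓ : ℕ) [Fact ℓ.Prime] (n : ℕ) (hn : 1 ≤ n)
    (r : GL (Fin n) ℤ_[ℓ] →* GL (Fin n) (ZMod ℓ))
    (hr : r = Matrix.GeneralLinearGroup.map (PadicInt.toZMod (p := ℓ)))
    (H : Subgroup r.ker) (hH : IsOpen (H : Set r.ker)) :
    ∃ k : ℕ, H.index = ℓ ^ k := by
  let φ (m : ℕ) : r.ker →* GL (Fin n) (ZMod (ℓ ^ m)) :=
    (Matrix.GeneralLinearGroup.map (PadicInt.toZModPow (p := ℓ) m)).comp r.ker.subtype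
  obtain ⟨m, hm⟩ : ∃ m, (φ m).ker ≤ H := by
    by_contra! hcon
    have : ∀ m, ∃ g : r.ker, φ m g = 1 ∧ g ∉ H := by
      intro m
      obtain ⟨g, h1, h2⟩ := SetLike.not_le_iff_exists.1 (hcon m)
      exact ⟨g, h1, h2⟩
    choose g hg hgH using this
    have ht : Filter.Tendsto g Filter.atTop (nhds 1) := by
      rw [tendsto_subtype_rng, Units.isEmbedding_embedProduct.tendsto_nhds_iff]
      refine Filter.Tendsto.prodMk_nhds (aux_tendsto ℓ n _ hg) ?_
      refine (MulOpposite.continuous_op.tendsto _).comp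
        (aux_tendsto ℓ n (fun m => ((g m : GL (Fin n) ℤ_[ℓ]))⁻¹) fun m => ?_)
      have := hg m
      simp only [φ, MonoidHom.comp_apply, Subgroup.subtype_apply] at this
      rw [map_inv, this, inv_one]
    obtain ⟨k, hk⟩ := (ht.eventually (hH.mem_nhds H.one_mem)).exists
    exact hgH k hk
  have hp : IsPGroup ℓ (φ m).range := by
    rintro ⟨_, g, rfl⟩
    refine ⟨m, Subtype.ext ?_⟩
    change (φ m g) ^ ℓ ^ m = 1
    obtain ⟨A, hA⟩ : ∃ A : Matrix (Fin n) (Fin n) ℤ_[ℓ],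
        ((g : GL (Fin n) ℤ_[ℓ]) : Matrix (Fin n) (Fin n) ℤ_[ℓ]) = 1 + (ℓ : ℤ_[ℓ]) • A := by
      have hg : r g = 1 := g.2
      have : ∀ i j, ∃ a : ℤ_[ℓ], ((g : GL (Fin n) ℤ_[ℓ]) : Matrix (Fin n) (Fin n) ℤ_[ℓ]) i j
          - (1 : Matrix (Fin n) (Fin n) ℤ_[ℓ]) i j = ℓ * a := by
        intro i j
        change (ℓ : ℤ_[ℓ]) ∣ _
        rw [← Ideal.mem_span_singleton, ← PadicInt.maximalIdeal_eq_span_p, ← PadicInt.ker_toZMod,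
          RingHom.mem_ker, map_sub]
        have := congrArg (fun x : GL (Fin n) (ZMod ℓ) => x.val i j) hg
        simp only [hr, Matrix.GeneralLinearGroup.map_apply] at this
        rw [this, sub_eq_zero]
        by_cases hij : i = j <;> simp [Matrix.one_apply, hij]
      choose A hA using this
      refine ⟨Matrix.of A, ?_⟩
      ext1 i j
      rw [Matrix.add_apply, Matrix.smul_apply, Matrix.of_apply, smul_eq_mul, ← hA]
      ring
    obtain ⟨B, hB⟩ := aux_pow ℓ n A m
    rw [← map_pow]
    ext i j
    change PadicInt.toZModPow m (((g : GL (Fin n) ℤ_[ℓ]) ^ ℓ ^ m : GL (Fin n) ℤ_[ℓ]) i j) = _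
    rw [Units.val_pow_eq_pow_val, hA, hB, Matrix.add_apply, Matrix.smul_apply, smul_eq_mul, map_add,
      map_mul]
    have : PadicInt.toZModPow m ((ℓ : ℤ_[ℓ]) ^ (m+1)) = 0 := by
      rw [pow_succ, map_mul, map_pow, map_natCast, ← Nat.cast_pow, ZMod.natCast_self, zero_mul]
    rw [this]
    by_cases hij : i = j <;> simp [Matrix.one_apply, hij]
  have : NeZero (ℓ ^ m) := ⟨pow_ne_zero _ (Fact.out : ℓ.Prime).ne_zero⟩
  obtain ⟨k, hk⟩ := IsPGroup.iff_card.1 hp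
  have hd := Subgroup.index_dvd_of_le hm
  rw [Subgroup.index_ker, hk] at hd
  obtain ⟨j, -, hj⟩ := (Nat.dvd_prime_pow Fact.out).1 hd
  exact ⟨j, hj⟩
end

section
/- Let ℓ be a prime number and n ≥ 1 an integer. Let G be a profinite group which is isomorphic, as a topological group, to a quotient A/B, where A is a closed subgroup of GL_n(ℤ_ℓ) and B is a closed normal subgroup of A. Let G⁺ be the topological closure of the subgroup of G generated by all pro-ℓ closed subgroups of G. Then: G⁺ is a normal subgroup of G; the quotient group G/G⁺ is finite; the order of G/G⁺ is not divisible by ℓ; and G/G⁺ is isomorphic to a subquotient of GL_n(𝔽_ℓ), i.e. there exist a subgroup H of GL_n(𝔽_ℓ) and a normal subgroup N of H such that G/G⁺ is isomorphic to H/N. -/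
open Matrix

/-- A closed subgroup `H` of a topological group is pro-`ℓ` if every open subgroup of `H`
(with the subspace topology) has index a power of `ℓ`. -/
def IsProL (ℓ : ℕ) {G : Type*} [Group G] [TopologicalSpace G] (H : Subgroup G) : Prop :=
  ∀ U : Subgroup H, IsOpen (U : Set H) → ∃ k : ℕ, U.index = ℓ ^ k

/-- `Q` is a subquotient of `T` if there are a subgroup `H` of `T` and a normal subgroup
`N` of `H` such that `Q` is isomorphic to `H/N`. -/
def Group.IsSubquotientOf (Q T : Type*) [Group Q] [Group T] : Prop :=
  ∃ (H : Subgroup T) (N : Subgroup H) (hN : N.Normal),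
    haveI := hN; Nonempty (Q ≃* (H ⧸ N))

open Topology Filter

theorem aux_proL {ℓ : ℕ} [hp : Fact ℓ.Prime] {G : Type*} [Group G] [TopologicalSpace G]
    [IsTopologicalGroup G] [CompactSpace G] (H : Subgroup G) (hH : IsClosed (H : Set G))
    (h : ∀ x ∈ H, ∀ U ∈ 𝓝 (1 : G), ∃ k : ℕ, x ^ (ℓ ^ k) ∈ U) : IsProL ℓ H := by
  intro U hU
  have : CompactSpace H := isCompact_iff_compactSpace.mp hH.isCompact
  have : Finite (H ⧸ U) := U.quotient_finite_of_isOpen hU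
  have : U.FiniteIndex := Subgroup.finiteIndex_of_finite_quotient
  have hV : IsOpen (U.normalCore : Set H) :=
    Subgroup.isOpen_of_isClosed_of_finiteIndex _
      (U.normalCore_isClosed (Subgroup.isClosed_of_isOpen U hU))
  have hP : IsPGroup ℓ (H ⧸ U.normalCore) := by
    intro q
    obtain ⟨x, rfl⟩ := QuotientGroup.mk_surjective q
    obtain ⟨O, hO, hOV⟩ := isOpen_induced_iff.mp hV
    have h1 : (1 : H) ∈ (Subtype.val ⁻¹' O : Set H) := by
      rw [hOV]; exact one_mem U.normalCore
    obtain ⟨k, hk⟩ := h x.1 x.2 O (hO.mem_nhds h1)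
    refine ⟨k, ?_⟩
    rw [← QuotientGroup.mk_pow, QuotientGroup.eq_one_iff]
    have : x ^ ℓ ^ k ∈ (Subtype.val ⁻¹' O : Set H) := by simpa using hk
    rw [hOV] at this
    exact this
  have : Finite (H ⧸ U.normalCore) := Subgroup.finite_quotient_of_finiteIndex
  obtain ⟨k, hk⟩ := IsPGroup.iff_card.mp hP
  have hd : U.index ∣ ℓ ^ k := by
    rw [← hk]
    exact Subgroup.index_dvd_of_le U.normalCore_le
  obtain ⟨m, _, hm⟩ := (Nat.dvd_prime_pow hp.out).mp hd
  exact ⟨m, hm⟩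

theorem aux_conj {ℓ : ℕ} {G : Type*} [Group G] [TopologicalSpace G]
    [IsTopologicalGroup G] (g : G) (H : Subgroup G) (hH : IsClosed (H : Set G))
    (h : IsProL ℓ H) : IsClosed (H.map (MulAut.conj g).toMonoidHom : Set G) ∧
      IsProL ℓ (H.map (MulAut.conj g).toMonoidHom) := by
  constructor
  · have : IsClosed ((fun x => g⁻¹ * x * g) ⁻¹' (H : Set G)) :=
      hH.preimage (by fun_prop)
    convert this using 1
    ext x
    simp only [Subgroup.coe_map, Set.mem_image, Set.mem_preimage, SetLike.mem_coe]
    constructor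
    · rintro ⟨y, hy, rfl⟩
      simpa [mul_assoc] using hy
    · intro hx
      exact ⟨_, hx, by simp [mul_assoc]⟩
  · intro U hU
    have hs := (MulAut.conj g).toMonoidHom.subgroupMap_surjective H
    have hc : Continuous ((MulAut.conj g).toMonoidHom.subgroupMap H) := by
      apply Continuous.subtype_mk
      change Continuous fun x : H => g * x.1 * g⁻¹
      fun_prop
    obtain ⟨k, hk⟩ := h (U.comap ((MulAut.conj g).toMonoidHom.subgroupMap H)) (hU.preimage hc)
    exact ⟨k, by rw [← hk, Subgroup.index_comap_of_surjective _ hs]⟩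

theorem aux_normal {ℓ : ℕ} {G : Type*} [Group G] [TopologicalSpace G]
    [IsTopologicalGroup G] :
    (⨆ H ∈ {H : Subgroup G | IsClosed (H : Set G) ∧ IsProL ℓ H}, H).Normal := by
  constructor
  intro x hx g
  have : (⨆ H ∈ {H : Subgroup G | IsClosed (H : Set G) ∧ IsProL ℓ H}, H) ≤
    (⨆ H ∈ {H : Subgroup G | IsClosed (H : Set G) ∧ IsProL ℓ H}, H).comap
      (MulAut.conj g).toMonoidHom := by
    refine iSup₂_le fun H hH => ?_
    rw [← Subgroup.map_le_iff_le_comap]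
    exact le_iSup₂_of_le (H.map (MulAut.conj g).toMonoidHom) (aux_conj g H hH.1 hH.2) le_rfl
  simpa using this hx

theorem aux_pow_s8 {ℓ : ℕ} [hp : Fact ℓ.Prime] {R : Type*} [Ring R] (a : R)
    (ha : ∃ y, a = 1 + (ℓ : R) * y) (k : ℕ) :
    ∃ y, a ^ (ℓ ^ k) = 1 + (ℓ : R) ^ (k + 1) * y := by
  induction k with
  | zero => simpa using ha
  | succ k ih =>
    obtain ⟨y, hy⟩ := ih
    obtain ⟨r, hr⟩ := (Commute.one_left ((ℓ : R) ^ (k + 1) * y)).exists_add_pow_prime_eq hp.out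
    have hc : Commute ((ℓ : R) ^ (k + 1)) y := (Nat.cast_commute ℓ y).pow_left _
    have h2 : (k + 1) * ℓ = (k + 1 + 1) + ((k + 1) * ℓ - (k + 1 + 1)) := by
      have := hp.out.two_le
      have : (k + 1) * 2 ≤ (k + 1) * ℓ := Nat.mul_le_mul_left _ this
      omega
    refine ⟨(ℓ : R) ^ ((k + 1) * ℓ - (k + 1 + 1)) * y ^ ℓ + y * r, ?_⟩
    rw [pow_succ ℓ k, pow_mul, hy, hr, hc.mul_pow, ← pow_mul, h2, pow_add]
    rw [← h2, pow_succ' _ (k + 1)]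
    rw [one_pow]
    noncomm_ring

theorem aux_tendsto_s8 {ℓ : ℕ} [hp : Fact ℓ.Prime] {n : ℕ} (a : Matrix (Fin n) (Fin n) ℤ_[ℓ])
    (ha : (PadicInt.toZMod (p := ℓ)).mapMatrix a = 1) :
    Tendsto (fun k : ℕ => a ^ (ℓ ^ k)) atTop (𝓝 1) := by
  have h1 : ∃ y, a = 1 + (ℓ : Matrix (Fin n) (Fin n) ℤ_[ℓ]) * y := by
    have : ∀ i j, ∃ c : ℤ_[ℓ], a i j - (1 : Matrix (Fin n) (Fin n) ℤ_[ℓ]) i j = ℓ * c := by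
      intro i j
      have h : PadicInt.toZMod (p := ℓ) (a i j - (1 : Matrix (Fin n) (Fin n) ℤ_[ℓ]) i j) = 0 := by
        have := congrFun (congrFun ha i) j
        rw [map_sub, sub_eq_zero]
        simp only [RingHom.mapMatrix_apply, Matrix.map_apply] at this
        rw [this]
        by_cases hij : i = j <;> simp [Matrix.one_apply, hij]
      rw [← RingHom.mem_ker, PadicInt.ker_toZMod, PadicInt.maximalIdeal_eq_span_p,
        Ideal.mem_span_singleton] at h
      exact h
    choose c hc using this
    refine ⟨Matrix.of c, ?_⟩
    ext1 i j
    rw [← nsmul_eq_mul]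
    simp [← hc]
  choose y hy using aux_pow_s8 a h1
  simp_rw [hy]
  refine tendsto_pi_nhds.mpr fun i => tendsto_pi_nhds.mpr fun j => ?_
  have h0 : Tendsto (fun k : ℕ => (ℓ : ℤ_[ℓ]) ^ (k + 1) * y k i j) atTop (𝓝 0) := by
    rw [tendsto_zero_iff_norm_tendsto_zero]
    have hl : ‖(ℓ : ℤ_[ℓ])‖ < 1 := by
      rw [PadicInt.norm_lt_one_iff_dvd]
    have := (tendsto_pow_atTop_nhds_zero_of_lt_one (norm_nonneg (ℓ : ℤ_[ℓ])) hl).comp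
      (tendsto_add_atTop_nat 1)
    refine squeeze_zero (fun _ => norm_nonneg _) (fun k => ?_) this
    rw [norm_mul, norm_pow]
    exact mul_le_of_le_one_right (by positivity) (PadicInt.norm_le_one _)
  have := h0.const_add ((1 : Matrix (Fin n) (Fin n) ℤ_[ℓ]) i j)
  rw [add_zero] at this
  refine this.congr fun k => ?_
  have : (ℓ : Matrix (Fin n) (Fin n) ℤ_[ℓ]) ^ (k + 1) * y k
    = (ℓ ^ (k + 1) : ℕ) • y k := by simp [nsmul_eq_mul]
  rw [this, Matrix.add_apply, Matrix.smul_apply, nsmul_eq_mul, Nat.cast_pow]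

theorem aux_tendsto_GL {ℓ : ℕ} [hp : Fact ℓ.Prime] {n : ℕ} (a : GL (Fin n) ℤ_[ℓ])
    (ha : Matrix.GeneralLinearGroup.map (PadicInt.toZMod (p := ℓ)) a = 1) :
    Tendsto (fun k : ℕ => a ^ (ℓ ^ k)) atTop (𝓝 1) := by
  rw [Units.isInducing_embedProduct.tendsto_nhds_iff]
  have key : ∀ b : GL (Fin n) ℤ_[ℓ],
      Matrix.GeneralLinearGroup.map (PadicInt.toZMod (p := ℓ)) b = 1 →
      Tendsto (fun k : ℕ => (b : Matrix (Fin n) (Fin n) ℤ_[ℓ]) ^ (ℓ ^ k)) atTop (𝓝 1) :=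
    fun b hb => aux_tendsto_s8 _ (congrArg Units.val hb)
  have h1 := key a ha
  have h2 := key a⁻¹ (by rw [map_inv, ha, inv_one])
  have h3 := h1.prodMk_nhds ((MulOpposite.continuous_op.tendsto _).comp h2)
  exact h3

theorem aux_open {ℓ : ℕ} [hp : Fact ℓ.Prime] {n : ℕ} :
    IsOpen ((Matrix.GeneralLinearGroup.map (n := Fin n) (PadicInt.toZMod (p := ℓ))).ker :
      Set (GL (Fin n) ℤ_[ℓ])) := by
  have : ((Matrix.GeneralLinearGroup.map (n := Fin n) (PadicInt.toZMod (p := ℓ))).ker :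
      Set (GL (Fin n) ℤ_[ℓ])) = ⋂ i, ⋂ j, {x : GL (Fin n) ℤ_[ℓ] |
        ‖x.1 i j - (1 : Matrix (Fin n) (Fin n) ℤ_[ℓ]) i j‖ < 1} := by
    ext x
    simp only [SetLike.mem_coe, MonoidHom.mem_ker, Set.mem_iInter, Set.mem_ofPred_eq]
    rw [Units.ext_iff, ← Matrix.ext_iff]
    refine forall_congr' fun i => forall_congr' fun j => ?_
    rw [PadicInt.norm_lt_one_iff_dvd, ← Ideal.mem_span_singleton,
      ← PadicInt.maximalIdeal_eq_span_p, ← PadicInt.ker_toZMod, RingHom.mem_ker, map_sub,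
      sub_eq_zero]
    have : PadicInt.toZMod (p := ℓ) ((1 : Matrix (Fin n) (Fin n) ℤ_[ℓ]) i j) =
        (1 : Matrix (Fin n) (Fin n) (ZMod ℓ)) i j := by
      by_cases hij : i = j <;> simp [Matrix.one_apply, hij]
    rw [this]
    rfl
  rw [this]
  refine isOpen_iInter_of_finite fun i => isOpen_iInter_of_finite fun j => ?_
  refine isOpen_lt ?_ continuous_const
  have : Continuous fun x : GL (Fin n) ℤ_[ℓ] => x.1 i j :=
    (Units.continuous_val (M := Matrix (Fin n) (Fin n) ℤ_[ℓ])).matrix_elem i j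
  exact (this.sub continuous_const).norm

/-- Let `ℓ` be a prime, `n ≥ 1`, and let `G` be a profinite group isomorphic,
as a topological group, to a quotient `A/B` with `A` a closed subgroup of `GL_n(ℤ_ℓ)` and
`B` a closed normal subgroup of `A`. Let `G⁺` be the closure of the subgroup generated by
all pro-`ℓ` closed subgroups of `G`. Then `G⁺` is normal in `G`, the quotient `G/G⁺` is
finite of order prime to `ℓ`, and `G/G⁺` is isomorphic to a subquotient of `GL_n(𝔽_ℓ)`. -/
theorem stmt8
    (ℓ : ℕ) [Fact ℓ.Prime] (n : ℕ) (hn : 1 ≤ n)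
    (G : Type*) [Group G] [TopologicalSpace G] [IsTopologicalGroup G]
    [CompactSpace G] [T2Space G] [TotallyDisconnectedSpace G]
    (A : Subgroup (GL (Fin n) ℤ_[ℓ])) (hA : IsClosed (A : Set (GL (Fin n) ℤ_[ℓ])))
    (B : Subgroup A) [B.Normal] (hB : IsClosed (B : Set A))
    (e : G ≃* (A ⧸ B)) (he : Continuous e) (he' : Continuous e.symm)
    (Gplus : Subgroup G)
    (hGplus : Gplus =
      (⨆ H ∈ {H : Subgroup G | IsClosed (H : Set G) ∧ IsProL ℓ H}, H).topologicalClosure) :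
    Gplus.Normal ∧ Finite (G ⧸ Gplus) ∧ ¬ ℓ ∣ Nat.card (G ⧸ Gplus) ∧
      (∃ hnorm : Gplus.Normal, haveI := hnorm;
        Group.IsSubquotientOf (G ⧸ Gplus) (GL (Fin n) (ZMod ℓ))) := by
  have hℓ : ℓ.Prime := Fact.out
  have hN : Gplus.Normal := by
    rw [hGplus]
    have := aux_normal (ℓ := ℓ) (G := G)
    exact Subgroup.is_normal_topologicalClosure _
  have hmem : ∀ H : Subgroup G, IsClosed (H : Set G) → IsProL ℓ H → H ≤ Gplus := by
    intro H h1 h2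
    rw [hGplus]
    exact (le_iSup₂_of_le (f := fun (H : Subgroup G)
      (_ : H ∈ {H : Subgroup G | IsClosed (H : Set G) ∧ IsProL ℓ H}) => H) H ⟨h1, h2⟩ le_rfl).trans
      (Subgroup.le_topologicalClosure _)
  let r : A →* GL (Fin n) (ZMod ℓ) :=
    (Matrix.GeneralLinearGroup.map (PadicInt.toZMod (p := ℓ))).comp A.subtype
  let f : A →* G := e.symm.toMonoidHom.comp (QuotientGroup.mk' B)
  have hfs : Function.Surjective f :=
    e.symm.surjective.comp (QuotientGroup.mk'_surjective B)
  have hfc : Continuous f := he'.comp QuotientGroup.continuous_mk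
  have hfo : IsOpenMap f := by
    have h1 : IsOpenMap e.symm := fun s hs => by
      have : e.symm '' s = e ⁻¹' s := e.symm.toEquiv.image_eq_preimage_symm s
      rw [this]
      exact hs.preimage he
    exact h1.comp QuotientGroup.isOpenMap_coe
  have hro : IsOpen (r.ker : Set A) := aux_open.preimage continuous_subtype_val
  let K : Subgroup G := r.ker.map f
  have hKo : IsOpen (K : Set G) := hfo _ hro
  have hKn : K.Normal := Subgroup.Normal.map inferInstance f hfs
  have hKpow : ∀ x ∈ K, ∀ U ∈ 𝓝 (1 : G), ∃ k : ℕ, x ^ (ℓ ^ k) ∈ U := by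
    rintro x ⟨a, ha, rfl⟩ U hU
    have h1 : Tendsto (fun k : ℕ => a ^ (ℓ ^ k)) atTop (𝓝 1) := by
      rw [Topology.IsInducing.subtypeVal.tendsto_nhds_iff]
      exact aux_tendsto_GL a.1 ha
    have h2 := (hfc.tendsto 1).comp h1
    rw [map_one] at h2
    obtain ⟨k, hk⟩ := (h2.eventually_mem hU).exists
    exact ⟨k, by simpa using hk⟩
  have hKle : K ≤ Gplus :=
    hmem K (Subgroup.isClosed_of_isOpen K hKo)
      (aux_proL K (Subgroup.isClosed_of_isOpen K hKo) hKpow)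
  have hGo : IsOpen (Gplus : Set G) := Subgroup.isOpen_mono hKle hKo
  have hfin : Finite (G ⧸ Gplus) := Gplus.quotient_finite_of_isOpen hGo
  have hfinK : Finite (G ⧸ K) := K.quotient_finite_of_isOpen hKo
  refine ⟨hN, hfin, ?_, hN, ?_⟩
  · intro hdvd
    have := Fintype.ofFinite (G ⧸ Gplus)
    obtain ⟨q, hq⟩ := exists_prime_orderOf_dvd_card' (G := G ⧸ Gplus) ℓ hdvd
    obtain ⟨g, rfl⟩ := QuotientGroup.mk_surjective q
    obtain ⟨a, m, hm, ham⟩ := Nat.exists_eq_pow_mul_and_not_dvd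
      (orderOf_pos (g : G ⧸ K)).ne' ℓ hℓ.ne_one
    let H : Subgroup G := (Subgroup.zpowers ((g : G ⧸ K) ^ m)).comap (QuotientGroup.mk' K)
    have hKH : K ≤ H := by
      intro x hx
      change (x : G ⧸ K) ∈ Subgroup.zpowers ((g : G ⧸ K) ^ m)
      rw [(QuotientGroup.eq_one_iff x).mpr hx]
      exact one_mem _
    have hHc : IsClosed (H : Set G) :=
      Subgroup.isClosed_of_isOpen H (Subgroup.isOpen_mono hKH hKo)
    have hHp : IsProL ℓ H := by
      refine aux_proL H hHc ?_
      intro x hx U hU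
      obtain ⟨j, hj⟩ := Subgroup.mem_zpowers_iff.mp (Subgroup.mem_comap.mp hx)
      have hx1 : x ^ ℓ ^ a ∈ K := by
        rw [← QuotientGroup.eq_one_iff, QuotientGroup.mk_pow]
        change (QuotientGroup.mk' K x) ^ ℓ ^ a = 1
        rw [← hj, ← _root_.zpow_natCast, ← _root_.zpow_mul, mul_comm, _root_.zpow_mul, _root_.zpow_natCast, ← pow_mul,
          mul_comm m, ← ham, pow_orderOf_eq_one, _root_.one_zpow]
      obtain ⟨k, hk⟩ := hKpow _ hx1 U hU
      exact ⟨a + k, by rwa [pow_add, pow_mul]⟩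
    have hgH : g ^ m ∈ H := by
      change ((g ^ m : G) : G ⧸ K) ∈ Subgroup.zpowers ((g : G ⧸ K) ^ m)
      exact Subgroup.mem_zpowers _
    have := hmem H hHc hHp hgH
    rw [← QuotientGroup.eq_one_iff, QuotientGroup.mk_pow, ← orderOf_dvd_iff_pow_eq_one, hq] at this
    exact hm this
  · let φ : A →* G ⧸ Gplus := (QuotientGroup.mk' Gplus).comp f
    have hφ : Function.Surjective φ := (QuotientGroup.mk'_surjective Gplus).comp hfs
    have hker : ∀ x ∈ r.ker, φ x = 1 := fun x hx =>
      (QuotientGroup.eq_one_iff _).mpr (hKle ⟨x, hx, rfl⟩)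
    let ψ : r.range →* G ⧸ Gplus :=
      (QuotientGroup.lift r.ker φ hker).comp (QuotientGroup.quotientKerEquivRange r).symm.toMonoidHom
    have hψ : Function.Surjective ψ :=
      (QuotientGroup.lift_surjective_of_surjective _ _ hφ hker).comp
        (QuotientGroup.quotientKerEquivRange r).symm.surjective
    exact ⟨r.range, ψ.ker, inferInstance,
      ⟨(QuotientGroup.quotientKerEquivOfSurjective ψ hψ).symm⟩⟩
end

section
/- Let ℓ be a prime number and let G be a profinite group such that the topological closure of the subgroup generated by all pro-ℓ closed subgroups of G is all of G. Then every nontrivial finite continuous quotient of G has order divisible by ℓ; that is, for every open normal subgroup N of G with N ≠ G, the index [G:N] is divisible by ℓ. -/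
/-- Let `ℓ` be a prime and `G` a profinite group such that the topological
closure of the subgroup generated by all pro-`ℓ` closed subgroups of `G` is all of `G`.
Then every proper open normal subgroup of `G` has index divisible by `ℓ`. -/
theorem stmt10
    (ℓ : ℕ) (hℓ : ℓ.Prime)
    (G : Type*) [Group G] [TopologicalSpace G] [IsTopologicalGroup G]
    [CompactSpace G] [T2Space G] [TotallyDisconnectedSpace G]
    (hG : (⨆ H ∈ {H : Subgroup G | IsClosed (H : Set G) ∧ IsProL ℓ H}, H).topologicalClosure
      = ⊤)
    (N : Subgroup G) [N.Normal] (hNopen : IsOpen (N : Set G)) (hNne : N ≠ ⊤) :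
    ℓ ∣ N.index := by
  by_contra hdvd
  apply hNne
  rw [eq_top_iff, ← hG]
  refine Subgroup.topologicalClosure_minimal _ ?_ (Subgroup.isClosed_of_isOpen N hNopen)
  refine iSup₂_le fun H hH => ?_
  obtain ⟨-, hp⟩ := hH
  obtain ⟨k, hk⟩ := hp (N.subgroupOf H) (hNopen.preimage continuous_subtype_val)
  have hk' : N.relIndex H = ℓ ^ k := hk
  have hd : N.relIndex H ∣ N.index := Subgroup.relIndex_dvd_index_of_normal N H
  rcases Nat.eq_zero_or_pos k with h0 | h0
  · rw [h0, pow_zero] at hk'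
    exact Subgroup.relIndex_eq_one.mp hk'
  · exact absurd (((dvd_pow_self ℓ h0.ne').trans (hk' ▸ dvd_rfl)).trans hd) hdvd
end

section
/- Let F be a finite field and let L/F be a (possibly infinite) Galois field extension such that the Galois group Gal(L/F) has finite exponent, i.e. there exists an integer n ≥ 1 with σⁿ = id for every σ ∈ Gal(L/F). Then L is a finite extension of F (L is finite-dimensional as an F-vector space). -/
/-- Let `F` be a finite field and `L/F` a (possibly infinite) Galois field
extension whose Galois group has finite exponent. Then `L/F` is a finite extension. -/
theorem stmt11
    (F L : Type*) [Field F] [Finite F] [Field L] [Algebra F L] [IsGalois F L]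
    (h : ∃ n : ℕ, 1 ≤ n ∧ ∀ σ : L ≃ₐ[F] L, σ ^ n = 1) :
    FiniteDimensional F L := by
  obtain ⟨n, hn, h⟩ := h
  have := Fintype.ofFinite F
  have key : ∀ (k : ℕ) (x : L),
      ((FiniteField.frobeniusAlgEquivOfAlgebraic F L) ^ k) x = x ^ (Fintype.card F ^ k) := by
    intro k x
    induction k with
    | zero => simp
    | succ k ih =>
      rw [pow_succ', AlgEquiv.mul_apply, ih, FiniteField.coe_frobeniusAlgEquivOfAlgebraic]
      simp only [← pow_mul, ← pow_succ]
  have hq : 1 < Fintype.card F ^ n := Nat.one_lt_pow (by omega) Fintype.one_lt_card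
  have hp := FiniteField.X_pow_card_sub_X_ne_zero L hq
  have hfin : Finite L := by
    rw [← Set.finite_univ_iff]
    refine (Polynomial.finite_setOfPred_isRoot hp).subset fun x _ => ?_
    have := key n x
    rw [h] at this
    simp only [AlgEquiv.one_apply] at this
    simp [Polynomial.IsRoot, ← this]
  exact Module.Finite.of_finite
end

section
/- Let K be a field, Ω/K a field extension, and d ≥ 1 an integer. Let (K_i)_{i∈I} be a family of intermediate fields of Ω/K such that for every i ∈ I the extension K_i/K is Galois of finite degree [K_i:K] ≤ d. Let E be the compositum of the fields K_i inside Ω, and let N be the least common multiple of the integers 1, 2, …, d. Then every field automorphism σ of E fixing K pointwise satisfies σ^N = id; in particular, the automorphism group Aut(E/K) has finite exponent. -/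
/-- Let `Ω/K` be a field extension and `d ≥ 1`. Let `(Kᵢ)_{i ∈ ι}` be a family
of intermediate fields of `Ω/K`, each Galois of finite degree `≤ d` over `K`, and let `E` be
their compositum. Let `N = lcm(1, …, d)`. Then every automorphism of `E` over `K` satisfies
`σ ^ N = 1`; in particular `Aut(E/K)` has finite exponent. -/
theorem stmt12
    (K Ω : Type*) [Field K] [Field Ω] [Algebra K Ω]
    (d : ℕ) (hd : 1 ≤ d)
    (ι : Type*) (Ki : ι → IntermediateField K Ω)
    (hGal : ∀ i, IsGalois K (Ki i))
    (hfin : ∀ i, FiniteDimensional K (Ki i))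
    (hdeg : ∀ i, Module.finrank K (Ki i) ≤ d)
    (E : IntermediateField K Ω) (hE : E = ⨆ i, Ki i)
    (N : ℕ) (hN : N = (Finset.Icc 1 d).lcm id) :
    ∀ σ : E ≃ₐ[K] E, σ ^ N = 1 := by
  intro σ
  have key : ∀ i, Ki i ≤ IntermediateField.lift
      (IntermediateField.fixedField (Subgroup.zpowers (σ ^ N))) := by
    intro i x hx
    have hle : Ki i ≤ E := hE ▸ le_iSup Ki i
    let L := IntermediateField.restrict hle
    let e : Ki i ≃ₐ[K] L := IntermediateField.restrict_algEquiv hle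
    haveI := hGal i
    haveI := hfin i
    haveI : IsGalois K L := IsGalois.of_algEquiv e
    haveI : FiniteDimensional K L := e.toLinearEquiv.finiteDimensional
    have hcard : Nat.card (L ≃ₐ[K] L) ∣ N := by
      rw [IsGalois.card_aut_eq_finrank, ← e.toLinearEquiv.finrank_eq, hN]
      exact Finset.dvd_lcm (f := id)
        (Finset.mem_Icc.2 ⟨Module.finrank_pos, hdeg i⟩)
    have hp : AlgEquiv.restrictNormalHom L (σ ^ N) = 1 := by
      rw [map_pow]
      obtain ⟨k, hk⟩ := hcard
      rw [hk, pow_mul, pow_card_eq_one', one_pow]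
    have hfix : (σ ^ N) ⟨x, hle hx⟩ = ⟨x, hle hx⟩ := by
      have hmem : (⟨x, hle hx⟩ : E) ∈ L := (IntermediateField.mem_restrict hle _).2 hx
      have h := AlgEquiv.restrictNormal_commutes (σ ^ N) L ⟨_, hmem⟩
      have hp' : (σ ^ N).restrictNormal L = 1 := hp
      rw [hp'] at h
      exact h.symm
    have : (⟨x, hle hx⟩ : E) ∈ IntermediateField.fixedField (Subgroup.zpowers (σ ^ N)) := by
      rw [IntermediateField.mem_fixedField_iff]
      intro f hf
      have hz : Subgroup.zpowers (σ ^ N) ≤ MulAction.stabilizer (E ≃ₐ[K] E) (⟨x, hle hx⟩ : E) := by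
        rw [Subgroup.zpowers_le]
        exact hfix
      exact hz hf
    exact (IntermediateField.mem_lift (⟨x, hle hx⟩ : E)).2 this
  ext x
  have hx : (x : Ω) ∈ ⨆ i, Ki i := hE ▸ x.2
  have h := (IntermediateField.mem_lift x).1 (iSup_le key hx)
  rw [IntermediateField.mem_fixedField_iff] at h
  rw [h _ (Subgroup.mem_zpowers _)]
  rfl
end
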